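/- arXiv:2112.00064 — 11 statements merged into one kernel-verified Lean document; each statement's English description precedes it below -/
import Mathlib

section
/- For every even integer n ≥ 20, every set of n distinct points in the Euclidean plane ℝ² admits an acute spanning tour, i.e., a Hamiltonian cycle drawn with straight-line edges in which every rotation angle is at most π/2. -/
open EuclideanGeometry Real

namespace AcuteTour

variable {P : Type*}

/-- The angle `∠ p q r` is at most a right angle, in coordinates. -/
def gd (X Y : P → ℝ) (p q r : P) : Prop :=
  0 ≤ (X p - X q) * (X r - X q) + (Y p - Y q) * (Y r - Y q)

/-- All consecutive triples of the list are good. -/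
def Ac (X Y : P → ℝ) : List P → Prop
  | p :: q :: r :: l => gd X Y p q r ∧ Ac X Y (q :: r :: l)
  | _ => True

/-- A cyclic acute ordering of the list `l`. -/
def Tour (X Y : P → ℝ) (l : List P) : Prop :=
  ∃ p q t, (p :: q :: t).Perm l ∧ Ac X Y (p :: q :: (t ++ [p, q]))

/-- Four quadrants. -/
structure Cfg (X Y : P → ℝ) (Q1 Q2 Q3 Q4 : List P) : Prop where
  x12 : ∀ a ∈ Q1, ∀ b ∈ Q2, X b ≤ X a
  x13 : ∀ a ∈ Q1, ∀ c ∈ Q3, X c ≤ X a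
  x42 : ∀ d ∈ Q4, ∀ b ∈ Q2, X b ≤ X d
  x43 : ∀ d ∈ Q4, ∀ c ∈ Q3, X c ≤ X d
  y13 : ∀ a ∈ Q1, ∀ c ∈ Q3, Y c ≤ Y a
  y14 : ∀ a ∈ Q1, ∀ d ∈ Q4, Y d ≤ Y a
  y23 : ∀ b ∈ Q2, ∀ c ∈ Q3, Y c ≤ Y b
  y24 : ∀ b ∈ Q2, ∀ d ∈ Q4, Y d ≤ Y b

/-- The path `c a b d` is acute. -/
def HT (X Y : P → ℝ) (a b c d : P) : Prop := gd X Y c a b ∧ gd X Y a b d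

theorem gd_symm {X Y : P → ℝ} {p q r : P} (h : gd X Y p q r) : gd X Y r q p := by
  unfold gd at *; linarith

theorem gd_negX {X Y : P → ℝ} {p q r : P} : gd (fun z => - X z) Y p q r ↔ gd X Y p q r := by
  unfold gd
  constructor <;> intro h <;> linarith

theorem gd_negY {X Y : P → ℝ} {p q r : P} : gd X (fun z => - Y z) p q r ↔ gd X Y p q r := by
  unfold gd
  constructor <;> intro h <;> linarith

theorem gd_swap {X Y : P → ℝ} {p q r : P} : gd Y X p q r ↔ gd X Y p q r := by
  unfold gd
  constructor <;> intro h <;> linarith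

theorem Ac_congr {X Y X' Y' : P → ℝ} (h : ∀ p q r, gd X Y p q r → gd X' Y' p q r) :
    ∀ l : List P, Ac X Y l → Ac X' Y' l
  | [], _ => trivial
  | [_], _ => trivial
  | [_, _], _ => trivial
  | _ :: q :: r :: l, H => ⟨h _ _ _ H.1, Ac_congr h (q :: r :: l) H.2⟩

theorem Tour_congr {X Y X' Y' : P → ℝ} (h : ∀ p q r, gd X Y p q r → gd X' Y' p q r)
    {l l' : List P} (hl : l.Perm l') : Tour X Y l → Tour X' Y' l' := by
  rintro ⟨p, q, t, h1, h2⟩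
  exact ⟨p, q, t, h1.trans hl, Ac_congr h _ h2⟩

theorem Cfg.negX {X Y : P → ℝ} {Q1 Q2 Q3 Q4 : List P} (h : Cfg X Y Q1 Q2 Q3 Q4) :
    Cfg (fun z => - X z) Y Q2 Q1 Q4 Q3 where
  x12 := fun a ha b hb => neg_le_neg (h.x12 b hb a ha)
  x13 := fun a ha b hb => neg_le_neg (h.x42 b hb a ha)
  x42 := fun a ha b hb => neg_le_neg (h.x13 b hb a ha)
  x43 := fun a ha b hb => neg_le_neg (h.x43 b hb a ha)
  y13 := h.y24
  y14 := h.y23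
  y23 := h.y14
  y24 := h.y13

theorem Cfg.swap {X Y : P → ℝ} {Q1 Q2 Q3 Q4 : List P} (h : Cfg X Y Q1 Q2 Q3 Q4) :
    Cfg Y X Q1 Q4 Q3 Q2 where
  x12 := h.y14
  x13 := h.y13
  x42 := h.y24
  x43 := h.y23
  y13 := h.x13
  y14 := h.x12
  y23 := h.x43
  y24 := h.x42

theorem Cfg.negY {X Y : P → ℝ} {Q1 Q2 Q3 Q4 : List P} (h : Cfg X Y Q1 Q2 Q3 Q4) :
    Cfg X (fun z => - Y z) Q4 Q3 Q2 Q1 := h.swap.negX.swap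

theorem Cfg.mono {X Y : P → ℝ} {Q1 Q2 Q3 Q4 R1 R2 R3 R4 : List P} (h : Cfg X Y Q1 Q2 Q3 Q4)
    (h1 : R1 ⊆ Q1) (h2 : R2 ⊆ Q2) (h3 : R3 ⊆ Q3) (h4 : R4 ⊆ Q4) : Cfg X Y R1 R2 R3 R4 where
  x12 := fun a ha b hb => h.x12 a (h1 ha) b (h2 hb)
  x13 := fun a ha b hb => h.x13 a (h1 ha) b (h3 hb)
  x42 := fun a ha b hb => h.x42 a (h4 ha) b (h2 hb)
  x43 := fun a ha b hb => h.x43 a (h4 ha) b (h3 hb)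
  y13 := fun a ha b hb => h.y13 a (h1 ha) b (h3 hb)
  y14 := fun a ha b hb => h.y14 a (h1 ha) b (h4 hb)
  y23 := fun a ha b hb => h.y23 a (h2 ha) b (h3 hb)
  y24 := fun a ha b hb => h.y24 a (h2 ha) b (h4 hb)

theorem Cfg.g131 {X Y : P → ℝ} {Q1 Q2 Q3 Q4 : List P} (h : Cfg X Y Q1 Q2 Q3 Q4)
    {p q r : P} (hp : p ∈ Q1) (hq : q ∈ Q3) (hr : r ∈ Q1) : gd X Y p q r := by
  have h1 := h.x13 p hp q hq
  have h2 := h.x13 r hr q hq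
  have h3 := h.y13 p hp q hq
  have h4 := h.y13 r hr q hq
  unfold gd
  nlinarith [mul_nonneg (sub_nonneg.2 h1) (sub_nonneg.2 h2),
    mul_nonneg (sub_nonneg.2 h3) (sub_nonneg.2 h4)]

theorem Cfg.g242 {X Y : P → ℝ} {Q1 Q2 Q3 Q4 : List P} (h : Cfg X Y Q1 Q2 Q3 Q4)
    {p q r : P} (hp : p ∈ Q2) (hq : q ∈ Q4) (hr : r ∈ Q2) : gd X Y p q r :=
  gd_negX.1 (h.negX.g131 hp hq hr)

theorem Cfg.g313 {X Y : P → ℝ} {Q1 Q2 Q3 Q4 : List P} (h : Cfg X Y Q1 Q2 Q3 Q4)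
    {p q r : P} (hp : p ∈ Q3) (hq : q ∈ Q1) (hr : r ∈ Q3) : gd X Y p q r :=
  gd_negY.1 (h.negY.g242 hp hq hr)

theorem Cfg.g424 {X Y : P → ℝ} {Q1 Q2 Q3 Q4 : List P} (h : Cfg X Y Q1 Q2 Q3 Q4)
    {p q r : P} (hp : p ∈ Q4) (hq : q ∈ Q2) (hr : r ∈ Q4) : gd X Y p q r :=
  gd_negX.1 (h.negX.g313 hp hq hr)

/-- Alternate two lists. -/
def alt : List P → List P → List P
  | u :: us, v :: vs => u :: v :: alt us vs
  | _, _ => []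

theorem alt_perm : ∀ us vs : List P, us.length = vs.length → (alt us vs).Perm (us ++ vs)
  | [], [], _ => by simp [alt]
  | [], _ :: _, h => by simp at h
  | _ :: _, [], h => by simp at h
  | u :: us, v :: vs, h => by
    have ih := alt_perm us vs (by simpa using h)
    simp only [alt, List.cons_append]
    refine List.Perm.cons _ ?_
    exact (ih.cons v).trans List.perm_middle.symm

theorem alt_ac {X Y : P → ℝ} {U V : List P}
    (hU : ∀ p ∈ U, ∀ q ∈ V, ∀ r ∈ U, gd X Y p q r)
    (hV : ∀ p ∈ V, ∀ q ∈ U, ∀ r ∈ V, gd X Y p q r)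
    {b : P} {t : List P} (hb : b ∈ U) (ht : ∀ v ∈ V, Ac X Y (v :: b :: t)) :
    ∀ us vs : List P, us ⊆ U → vs ⊆ V → ∀ e ∈ U, ∀ d ∈ V,
      Ac X Y (e :: d :: (alt us vs ++ b :: t))
  | [], _, _, _, e, he, d, hd => ⟨hU e he d hd b hb, ht d hd⟩
  | _ :: _, [], _, _, e, he, d, hd => ⟨hU e he d hd b hb, ht d hd⟩
  | u :: us, v :: vs, h1, h2, e, he, d, hd => by
    have hu : u ∈ U := h1 (by simp)
    have hv : v ∈ V := h2 (by simp)
    exact ⟨hU e he d hd u hu, hV d hd u hu v hv,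
      alt_ac hU hV hb ht us vs (fun x hx => h1 (by simp [hx])) (fun x hx => h2 (by simp [hx]))
        u hu v hv⟩

theorem core_real {a1 a2 b1 b2 c1 c2 d1 d2 : ℝ}
    (x12 : b1 ≤ a1) (x13 : c1 ≤ a1) (x42 : b1 ≤ d1) (x43 : c1 ≤ d1)
    (y13 : c2 ≤ a2) (y14 : d2 ≤ a2) (y24 : d2 ≤ b2)
    (hH : (a1 - c1) * (b1 - d1) + (a2 - c2) * (b2 - d2) ≤ 0)
    (hab : a2 ≤ b2)
    (hf : (c1 - a1) * (b1 - a1) + (c2 - a2) * (b2 - a2) < 0) :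
    0 ≤ (b1 - d1) * (c1 - d1) + (b2 - d2) * (c2 - d2) ∧
    0 ≤ (d1 - c1) * (a1 - c1) + (d2 - c2) * (a2 - c2) := by
  refine ⟨?_, by nlinarith [sq_nonneg (a1 - c1), sq_nonneg (a2 - c2)]⟩
  rcases le_total d2 c2 with h | h
  · nlinarith [mul_nonneg (sub_nonneg.2 x42) (sub_nonneg.2 x43),
      mul_nonneg (sub_nonneg.2 y24) (sub_nonneg.2 h)]
  obtain ⟨u, hu⟩ : ∃ u, u = a1 - c1 := ⟨_, rfl⟩
  obtain ⟨v, hv⟩ : ∃ v, v = a2 - c2 := ⟨_, rfl⟩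
  obtain ⟨p, hp⟩ : ∃ p, p = a1 - b1 := ⟨_, rfl⟩
  obtain ⟨q, hq⟩ : ∃ q, q = b2 - a2 := ⟨_, rfl⟩
  obtain ⟨s, hs⟩ : ∃ s, s = d1 - b1 := ⟨_, rfl⟩
  obtain ⟨t, ht⟩ : ∃ t, t = b2 - d2 := ⟨_, rfl⟩
  have u0 : 0 ≤ u := by linarith
  have v0 : 0 ≤ v := by linarith
  have p0 : 0 ≤ p := by linarith
  have q0 : 0 ≤ q := by linarith
  have s0 : 0 ≤ s := by linarith
  have t0 : 0 ≤ t := by linarith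
  have qt : q ≤ t := by linarith
  have e1 : u * p < v * q := by subst_vars; linarith
  have e2 : v * t ≤ u * s := by subst_vars; linarith
  have vq : 0 < v * q := lt_of_le_of_lt (mul_nonneg u0 p0) e1
  have vpos : 0 < v := pos_of_mul_pos_left vq q0
  have qpos : 0 < q := pos_of_mul_pos_right vq v0
  have tpos : 0 < t := by linarith
  have upos : 0 < u := by
    rcases u0.lt_or_eq with h | h
    · exact h
    · rw [← h] at e2
      nlinarith [mul_pos vpos tpos]
  have ps : p ≤ s := by
    have h1 : u * p ≤ u * s := by nlinarith
    exact le_of_mul_le_mul_left h1 upos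
  have key : 0 ≤ s * (s + u - p) - t * (q + v - t) := by
    nlinarith [mul_nonneg s0 (sub_nonneg.2 ps), mul_nonneg t0 (sub_nonneg.2 qt)]
  have : (b1 - d1) * (c1 - d1) + (b2 - d2) * (c2 - d2) = s * (s + u - p) - t * (q + v - t) := by
    subst_vars; ring
  rw [this]; exact key

theorem core1 {X Y : P → ℝ} {a b c d : P} (h : Cfg X Y [a] [b] [c] [d])
    (hH : (X a - X c) * (X b - X d) + (Y a - Y c) * (Y b - Y d) ≤ 0)
    (hab : Y a ≤ Y b) : HT X Y a b c d ∨ HT X Y d c b a := by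
  have x12 := h.x12 a (by simp) b (by simp)
  have x13 := h.x13 a (by simp) c (by simp)
  have x42 := h.x42 d (by simp) b (by simp)
  have x43 := h.x43 d (by simp) c (by simp)
  have y13 := h.y13 a (by simp) c (by simp)
  have y14 := h.y14 a (by simp) d (by simp)
  have y24 := h.y24 b (by simp) d (by simp)
  by_cases hf : (X c - X a) * (X b - X a) + (Y c - Y a) * (Y b - Y a) < 0
  · right
    exact core_real x12 x13 x42 x43 y13 y14 y24 hH hab hf
  · left
    refine ⟨not_lt.1 hf, ?_⟩
    unfold gd
    nlinarith [mul_nonneg (sub_nonneg.2 x12) (sub_nonneg.2 x42),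
      mul_nonneg (sub_nonneg.2 hab) (sub_nonneg.2 y24)]

theorem HT_rev {X Y : P → ℝ} {a b c d : P} (h : HT X Y a b c d) : HT X Y b a d c :=
  ⟨gd_symm h.2, gd_symm h.1⟩

theorem HT_negX {X Y : P → ℝ} {a b c d : P} :
    HT (fun z => - X z) Y a b c d ↔ HT X Y a b c d := by
  simp [HT, gd_negX]

theorem HT_negY {X Y : P → ℝ} {a b c d : P} :
    HT X (fun z => - Y z) a b c d ↔ HT X Y a b c d := by
  simp [HT, gd_negY]

theorem HT_swap {X Y : P → ℝ} {a b c d : P} : HT Y X a b c d ↔ HT X Y a b c d := by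
  simp only [HT, gd_swap (X := X) (Y := Y)]

theorem core2 {X Y : P → ℝ} {a b c d : P} (h : Cfg X Y [a] [b] [c] [d])
    (hH : (X a - X c) * (X b - X d) + (Y a - Y c) * (Y b - Y d) ≤ 0) :
    HT X Y a b c d ∨ HT X Y d c b a := by
  rcases le_total (Y a) (Y b) with hab | hab
  · exact core1 h hH hab
  · have := core1 h.negX (by linarith) hab
    rw [HT_negX, HT_negX] at this
    exact this.imp HT_rev HT_rev

theorem quad {X Y : P → ℝ} {a b c d : P} (h : Cfg X Y [a] [b] [c] [d]) :
    (HT X Y a b c d ∨ HT X Y d c b a) ∨ (HT X Y a d c b ∨ HT X Y b c d a) := by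
  rcases le_total ((X a - X c) * (X b - X d) + (Y a - Y c) * (Y b - Y d)) 0 with hH | hH
  · exact Or.inl (core2 h hH)
  · right
    have := core2 h.swap (by linarith)
    exact this.imp HT_swap.1 HT_swap.1

/-- One connection at the top, one at the bottom. -/
theorem tour_TB {X Y : P → ℝ} {a a' b b' c c' d d' : P} {r1 r2 r3 r4 : List P}
    (h : Cfg X Y (a :: a' :: r1) (b :: b' :: r2) (c :: c' :: r3) (d :: d' :: r4))
    (h13 : r1.length = r3.length) (h24 : r2.length = r4.length)
    (hT : HT X Y a b c d) (hB : HT X Y d' c' b' a') :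
    Tour X Y ((a :: a' :: r1) ++ (b :: b' :: r2) ++ (c :: c' :: r3) ++ (d :: d' :: r4)) := by
  have A1 : Ac X Y (c' :: a' :: (alt r3 r1 ++ c :: [a])) :=
    alt_ac (b := c) (t := [a]) (U := c :: c' :: r3) (V := a :: a' :: r1)
      (fun p hp q hq r hr => h.g313 hp hq hr) (fun p hp q hq r hr => h.g131 hp hq hr)
      (by simp) (fun v hv => ⟨h.g131 hv (by simp) (by simp), trivial⟩) r3 r1
      (fun x hx => by simp [hx]) (fun x hx => by simp [hx]) c' (by simp) a' (by simp)
  have A2 : Ac X Y (b :: d :: (alt r2 r4 ++ b' :: d' :: c' :: a' :: (alt r3 r1 ++ c :: [a]))) :=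
    alt_ac (b := b') (t := d' :: c' :: a' :: (alt r3 r1 ++ c :: [a])) (U := b :: b' :: r2) (V := d :: d' :: r4)
      (fun p hp q hq r hr => h.g242 hp hq hr) (fun p hp q hq r hr => h.g424 hp hq hr)
      (by simp) (fun v hv => ⟨h.g424 hv (by simp) (by simp), hB.1, hB.2, A1⟩) r2 r4
      (fun x hx => by simp [hx]) (fun x hx => by simp [hx]) b (by simp) d (by simp)
  refine ⟨c, a, b :: d :: (alt r2 r4 ++ b' :: d' :: c' :: a' :: alt r3 r1), ?_, ?_⟩
  · have P1 := alt_perm r2 r4 h24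
    have P2 := alt_perm r3 r1 h13.symm
    classical
    rw [List.perm_iff_count] at P1 P2 ⊢
    intro x
    have := P1 x
    have := P2 x
    simp only [List.count_append, List.count_cons] at *
    omega
  · simp only [List.cons_append, List.append_assoc, List.nil_append]
    exact ⟨hT.1, hT.2, A2⟩

/-- Two connections at the top, and a spike at the bottom. -/
theorem tour_TT {X Y : P → ℝ} {a a' α b b' b1 bx c c' γ d d' d1 d2 : P} {r1 r2 r3 r4 : List P}
    (h : Cfg X Y (a :: a' :: α :: r1) (b :: b' :: b1 :: bx :: r2)
      (c :: c' :: γ :: r3) (d :: d' :: d1 :: d2 :: r4))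
    (h13 : r1.length = r3.length) (h24 : r2.length = r4.length)
    (hT : HT X Y a b c d) (hT' : HT X Y a' b' c' d')
    (hg1 : Y d1 ≤ Y γ) (hg2 : Y d2 ≤ Y γ) :
    Tour X Y ((a :: a' :: α :: r1) ++ (b :: b' :: b1 :: bx :: r2) ++
      (c :: c' :: γ :: r3) ++ (d :: d' :: d1 :: d2 :: r4)) := by
  have A1 : Ac X Y (a' :: c' :: (alt r1 r3 ++ α :: [c, a])) :=
    alt_ac (b := α) (t := [c, a]) (U := a :: a' :: α :: r1) (V := c :: c' :: γ :: r3)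
      (fun p hp q hq r hr => h.g131 hp hq hr) (fun p hp q hq r hr => h.g313 hp hq hr)
      (by simp) (fun v hv => ⟨h.g313 hv (by simp) (by simp),
        h.g131 (by simp) (by simp) (by simp), trivial⟩) r1 r3
      (fun x hx => by simp [hx]) (fun x hx => by simp [hx]) a' (by simp) c' (by simp)
  have s1 : ∀ e ∈ d :: d' :: d1 :: d2 :: r4, Y e ≤ Y γ →
      ∀ z ∈ b :: b' :: b1 :: bx :: r2, gd X Y z e γ := by
    intro e he hey z hz
    have i1 := h.x42 e he z hz
    have i2 := h.y24 z hz e he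
    have i3 := h.x43 e he γ (by simp)
    unfold gd
    nlinarith [mul_nonneg (sub_nonneg.2 i1) (sub_nonneg.2 i3),
      mul_nonneg (sub_nonneg.2 i2) (sub_nonneg.2 hey)]
  have s2 : gd X Y d1 γ d2 := by
    have i1 := h.x43 d1 (by simp) γ (by simp)
    have i2 := h.x43 d2 (by simp) γ (by simp)
    unfold gd
    nlinarith [mul_nonneg (sub_nonneg.2 i1) (sub_nonneg.2 i2),
      mul_nonneg (sub_nonneg.2 hg1) (sub_nonneg.2 hg2)]
  -- the second connection, with what follows
  have A2 : ∀ v ∈ d :: d' :: d1 :: d2 :: r4,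
      Ac X Y (v :: bx :: d' :: b' :: a' :: c' :: (alt r1 r3 ++ α :: [c, a])) := fun v hv =>
    ⟨h.g424 hv (by simp) (by simp), h.g242 (by simp) (by simp) (by simp), gd_symm hT'.2,
      gd_symm hT'.1, A1⟩
  have A3 : Ac X Y (γ :: d2 :: (alt r2 r4 ++
      bx :: d' :: b' :: a' :: c' :: (alt r1 r3 ++ α :: [c, a]))) := by
    have H := alt_ac (X := X) (Y := Y) (U := b :: b' :: b1 :: bx :: r2) (V := d :: d' :: d1 :: d2 :: r4)
      (fun p hp q hq r hr => h.g242 hp hq hr) (fun p hp q hq r hr => h.g424 hp hq hr)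
      (by simp) A2 r2 r4
      (fun x hx => by simp [hx]) (fun x hx => by simp [hx]) b1 (by simp) d2 (by simp)
    cases r2 with
    | nil => exact ⟨gd_symm (s1 d2 (by simp) hg2 bx (by simp)), H.2⟩
    | cons u us =>
      cases r4 with
      | nil => simp at h24
      | cons v vs => exact ⟨gd_symm (s1 d2 (by simp) hg2 u (by simp)), H.2⟩
  refine ⟨c, a, b :: d :: b1 :: d1 :: γ :: d2 :: (alt r2 r4 ++
      bx :: d' :: b' :: a' :: c' :: (alt r1 r3 ++ [α])), ?_, ?_⟩
  · have P1 := alt_perm r2 r4 h24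
    have P2 := alt_perm r1 r3 h13
    classical
    rw [List.perm_iff_count] at P1 P2 ⊢
    intro x
    have := P1 x
    have := P2 x
    simp only [List.count_append, List.count_cons, List.count_nil] at *
    omega
  · simp only [List.cons_append, List.append_assoc, List.nil_append]
    exact ⟨hT.1, hT.2, h.g242 (by simp) (by simp) (by simp), h.g424 (by simp) (by simp) (by simp),
      s1 d1 (by simp) hg1 b1 (by simp), s2, A3⟩


theorem tour_TT4 {X Y : P → ℝ} {a a' a3 a4 b b' b3 b4 c c' c3 c4 d d' d3 d4 : P}
    {r1 r2 r3 r4 : List P}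
    (h : Cfg X Y (a :: a' :: a3 :: a4 :: r1) (b :: b' :: b3 :: b4 :: r2)
      (c :: c' :: c3 :: c4 :: r3) (d :: d' :: d3 :: d4 :: r4))
    (h13 : r1.length = r3.length) (h24 : r2.length = r4.length)
    (hT : HT X Y a b c d) (hT' : HT X Y a' b' c' d') :
    Tour X Y ((a :: a' :: a3 :: a4 :: r1) ++ (b :: b' :: b3 :: b4 :: r2) ++
      (c :: c' :: c3 :: c4 :: r3) ++ (d :: d' :: d3 :: d4 :: r4)) := by
  -- a high point of the third quadrant
  have caseC : ∀ {X Y : P → ℝ} {a a' a3 a4 b b' b3 b4 c c' c3 c4 d d' d3 d4 : P}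
      {r1 r2 r3 r4 : List P}
      (_ : Cfg X Y (a :: a' :: a3 :: a4 :: r1) (b :: b' :: b3 :: b4 :: r2)
        (c :: c' :: c3 :: c4 :: r3) (d :: d' :: d3 :: d4 :: r4))
      (_ : r1.length = r3.length) (_ : r2.length = r4.length)
      (_ : HT X Y a b c d) (_ : HT X Y a' b' c' d')
      (_ : Y d3 ≤ Y c3) (_ : Y d4 ≤ Y c3),
      Tour X Y ((a :: a' :: a3 :: a4 :: r1) ++ (b :: b' :: b3 :: b4 :: r2) ++
        (c :: c' :: c3 :: c4 :: r3) ++ (d :: d' :: d3 :: d4 :: r4)) := by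
    intro X Y a a' a3 a4 b b' b3 b4 c c' c3 c4 d d' d3 d4 r1 r2 r3 r4 h h13 h24 hT hT' g1 g2
    exact tour_TT (r1 := a4 :: r1) (r3 := c4 :: r3) h (by simp [h13]) h24 hT hT' g1 g2
  have permQ : ∀ (w x y z : P) (r : List P), (w :: x :: y :: z :: r).Perm (w :: x :: z :: y :: r) :=
    fun w x y z r => ((List.Perm.swap z y r).cons x).cons w
  by_cases k1 : Y d3 ≤ Y c3 ∧ Y d4 ≤ Y c3
  · exact caseC h h13 h24 hT hT' k1.1 k1.2
  by_cases k2 : Y d3 ≤ Y c4 ∧ Y d4 ≤ Y c4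
  · refine Tour_congr (fun _ _ _ => id) ?_ (caseC (h.mono (List.Subset.refl _) (List.Subset.refl _)
      (permQ c c' c4 c3 r3).subset (List.Subset.refl _)) h13 h24 hT hT' k2.1 k2.2)
    exact (((List.Perm.refl _).append (List.Perm.refl _)).append (permQ _ _ _ _ _)).append
      (List.Perm.refl _)
  -- now a point of the fourth quadrant is highest
  have hT1 := HT_negX.2 (HT_rev hT)
  have hT2 := HT_negX.2 (HT_rev hT')
  have perm2 : ∀ l1 l2 l3 l4 : List P, (l2 ++ l1 ++ l4 ++ l3).Perm (l1 ++ l2 ++ l3 ++ l4) := by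
    intro l1 l2 l3 l4
    classical
    rw [List.perm_iff_count]
    intro x
    simp only [List.count_append]
    omega
  rcases le_total (Y d3) (Y d4) with e | e
  · have g1 : Y c3 ≤ Y d4 := by
      by_contra hh; push Not at hh; exact k1 ⟨by linarith, hh.le⟩
    have g2 : Y c4 ≤ Y d4 := by
      by_contra hh; push Not at hh; exact k2 ⟨by linarith, hh.le⟩
    refine Tour_congr (fun _ _ _ => gd_negX.1) ?_ (caseC (h.negX.mono (List.Subset.refl _)
      (List.Subset.refl _) (permQ d d' d4 d3 r4).subset (List.Subset.refl _)) h24 h13 hT1 hT2 g1 g2)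
    exact ((((List.Perm.refl _).append (List.Perm.refl _)).append (permQ _ _ _ _ _)).append
      (List.Perm.refl _)).trans (perm2 _ _ _ _)
  · have g1 : Y c3 ≤ Y d3 := by
      by_contra hh; push Not at hh; exact k1 ⟨hh.le, by linarith⟩
    have g2 : Y c4 ≤ Y d3 := by
      by_contra hh; push Not at hh; exact k2 ⟨hh.le, by linarith⟩
    exact Tour_congr (fun _ _ _ => gd_negX.1) (perm2 _ _ _ _)
      (caseC h.negX h24 h13 hT1 hT2 g1 g2)

theorem tour_HH {X Y : P → ℝ} {a a' a3 a4 b b' b3 b4 c c' c3 c4 d d' d3 d4 : P}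
    {r1 r2 r3 r4 : List P}
    (h : Cfg X Y (a :: a' :: a3 :: a4 :: r1) (b :: b' :: b3 :: b4 :: r2)
      (c :: c' :: c3 :: c4 :: r3) (d :: d' :: d3 :: d4 :: r4))
    (h13 : r1.length = r3.length) (h24 : r2.length = r4.length)
    (hT : HT X Y a b c d ∨ HT X Y d c b a) (hT' : HT X Y a' b' c' d' ∨ HT X Y d' c' b' a') :
    Tour X Y ((a :: a' :: a3 :: a4 :: r1) ++ (b :: b' :: b3 :: b4 :: r2) ++
      (c :: c' :: c3 :: c4 :: r3) ++ (d :: d' :: d3 :: d4 :: r4)) := by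
  have permQ : ∀ (w x : P) (r : List P), (w :: x :: r).Perm (x :: w :: r) :=
    fun w x r => List.Perm.swap x w r
  rcases hT with t1 | t1 <;> rcases hT' with t2 | t2
  · exact tour_TT4 h h13 h24 t1 t2
  · exact tour_TB h (by simp [h13]) (by simp [h24]) t1 t2
  · refine Tour_congr (fun _ _ _ => id) ?_ (tour_TB (h.mono (permQ a' a _).subset
      (permQ b' b _).subset (permQ c' c _).subset (permQ d' d _).subset)
      (by simp [h13]) (by simp [h24]) t2 t1)
    exact (((permQ _ _ _).append (permQ _ _ _)).append (permQ _ _ _)).append (permQ _ _ _)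
  · refine Tour_congr (fun _ _ _ => gd_negY.1) ?_
      (tour_TT4 h.negY h24.symm h13.symm (HT_negY.2 t1) (HT_negY.2 t2))
    classical
    rw [List.perm_iff_count]
    intro x
    simp only [List.count_append]
    omega

theorem exists_four {l : List P} (h : 4 ≤ l.length) :
    ∃ a b c d r, l = a :: b :: c :: d :: r := by
  match l, h with
  | a :: b :: c :: d :: r, _ => exact ⟨a, b, c, d, r, rfl⟩

theorem tour_two {X Y : P → ℝ} {a a' a3 a4 b b' b3 b4 c c' c3 c4 d d' d3 d4 : P}
    {r1 r2 r3 r4 : List P}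
    (h : Cfg X Y (a :: a' :: a3 :: a4 :: r1) (b :: b' :: b3 :: b4 :: r2)
      (c :: c' :: c3 :: c4 :: r3) (d :: d' :: d3 :: d4 :: r4))
    (h13 : r1.length = r3.length) (h24 : r2.length = r4.length)
    (hh : ((HT X Y a b c d ∨ HT X Y d c b a) ∧ (HT X Y a' b' c' d' ∨ HT X Y d' c' b' a')) ∨
      ((HT X Y a d c b ∨ HT X Y b c d a) ∧ (HT X Y a' d' c' b' ∨ HT X Y b' c' d' a'))) :
    Tour X Y ((a :: a' :: a3 :: a4 :: r1) ++ (b :: b' :: b3 :: b4 :: r2) ++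
      (c :: c' :: c3 :: c4 :: r3) ++ (d :: d' :: d3 :: d4 :: r4)) := by
  rcases hh with ⟨h1, h2⟩ | ⟨h1, h2⟩
  · exact tour_HH h h13 h24 h1 h2
  · refine Tour_congr (fun _ _ _ => gd_swap.1) ?_ (tour_HH h.swap h13 h24.symm
      (h1.imp HT_swap.1 HT_swap.1) (h2.imp HT_swap.1 HT_swap.1))
    classical
    rw [List.perm_iff_count]
    intro x
    simp only [List.count_append]
    omega

theorem tour_cfg {X Y : P → ℝ} {Q1 Q2 Q3 Q4 : List P} (h : Cfg X Y Q1 Q2 Q3 Q4)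
    (h13 : Q1.length = Q3.length) (h24 : Q2.length = Q4.length)
    (h1 : 4 ≤ Q1.length) (h2 : 4 ≤ Q2.length) : Tour X Y (Q1 ++ Q2 ++ Q3 ++ Q4) := by
  obtain ⟨a1, a2, a3, a4, r1, rfl⟩ := exists_four h1
  obtain ⟨b1, b2, b3, b4, r2, rfl⟩ := exists_four h2
  obtain ⟨c1, c2, c3, c4, r3, rfl⟩ := exists_four (h13 ▸ h1)
  obtain ⟨d1, d2, d3, d4, r4, rfl⟩ := exists_four (h24 ▸ h2)
  have k13 : r1.length = r3.length := by simpa using h13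
  have k24 : r2.length = r4.length := by simpa using h24
  have q1 := quad (h.mono (R1 := [a1]) (R2 := [b1]) (R3 := [c1]) (R4 := [d1])
    (by simp) (by simp) (by simp) (by simp))
  have q2 := quad (h.mono (R1 := [a2]) (R2 := [b2]) (R3 := [c2]) (R4 := [d2])
    (by simp) (by simp) (by simp) (by simp))
  have q3 := quad (h.mono (R1 := [a3]) (R2 := [b3]) (R3 := [c3]) (R4 := [d3])
    (by simp) (by simp) (by simp) (by simp))
  have p13 : ∀ (w x y : P) (r : List P), (w :: y :: x :: r).Perm (w :: x :: y :: r) :=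
    fun w x y r => (List.Perm.swap x y r).cons w
  have p23 : ∀ (w x y : P) (r : List P), (x :: y :: w :: r).Perm (w :: x :: y :: r) :=
    fun w x y r => ((List.Perm.swap w y r).cons x).trans (List.Perm.swap w x _)
  by_cases e12 : ((HT X Y a1 b1 c1 d1 ∨ HT X Y d1 c1 b1 a1) ∧
      (HT X Y a2 b2 c2 d2 ∨ HT X Y d2 c2 b2 a2)) ∨
      ((HT X Y a1 d1 c1 b1 ∨ HT X Y b1 c1 d1 a1) ∧ (HT X Y a2 d2 c2 b2 ∨ HT X Y b2 c2 d2 a2))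
  · exact tour_two h k13 k24 e12
  by_cases e13 : ((HT X Y a1 b1 c1 d1 ∨ HT X Y d1 c1 b1 a1) ∧
      (HT X Y a3 b3 c3 d3 ∨ HT X Y d3 c3 b3 a3)) ∨
      ((HT X Y a1 d1 c1 b1 ∨ HT X Y b1 c1 d1 a1) ∧ (HT X Y a3 d3 c3 b3 ∨ HT X Y b3 c3 d3 a3))
  · refine Tour_congr (fun _ _ _ => id) ?_ (tour_two (h.mono (p13 a1 a2 a3 _).subset
      (p13 b1 b2 b3 _).subset (p13 c1 c2 c3 _).subset (p13 d1 d2 d3 _).subset) k13 k24 e13)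
    exact (((p13 _ _ _ _).append (p13 _ _ _ _)).append (p13 _ _ _ _)).append (p13 _ _ _ _)
  have e23 : ((HT X Y a2 b2 c2 d2 ∨ HT X Y d2 c2 b2 a2) ∧
      (HT X Y a3 b3 c3 d3 ∨ HT X Y d3 c3 b3 a3)) ∨
      ((HT X Y a2 d2 c2 b2 ∨ HT X Y b2 c2 d2 a2) ∧ (HT X Y a3 d3 c3 b3 ∨ HT X Y b3 c3 d3 a3)) := by
    generalize (HT X Y a1 b1 c1 d1 ∨ HT X Y d1 c1 b1 a1) = s1 at *
    generalize (HT X Y a2 b2 c2 d2 ∨ HT X Y d2 c2 b2 a2) = s2 at *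
    generalize (HT X Y a3 b3 c3 d3 ∨ HT X Y d3 c3 b3 a3) = s3 at *
    generalize (HT X Y a1 d1 c1 b1 ∨ HT X Y b1 c1 d1 a1) = t1 at *
    generalize (HT X Y a2 d2 c2 b2 ∨ HT X Y b2 c2 d2 a2) = t2 at *
    generalize (HT X Y a3 d3 c3 b3 ∨ HT X Y b3 c3 d3 a3) = t3 at *
    tauto
  refine Tour_congr (fun _ _ _ => id) ?_ (tour_two (h.mono (p23 a1 a2 a3 _).subset
      (p23 b1 b2 b3 _).subset (p23 c1 c2 c3 _).subset (p23 d1 d2 d3 _).subset) k13 k24 e23)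
  exact (((p23 _ _ _ _).append (p23 _ _ _ _)).append (p23 _ _ _ _)).append (p23 _ _ _ _)

/-! ### Halving sets -/

/-- `A` consists of `m` points of `S` with the largest values of `g`. -/
def Val (S : Finset P) (m : ℕ) (g : P → ℝ) (A : Finset P) : Prop :=
  A ⊆ S ∧ A.card = m ∧ ∀ p ∈ A, ∀ q ∈ S, q ∉ A → g q ≤ g p

theorem exists_val (S : Finset P) (g : P → ℝ) (m : ℕ) (hm : m ≤ S.card) :
    ∃ A, Val S m g A := by
  classical
  induction m with
  | zero => exact ⟨∅, by simp, by simp, by simp⟩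
  | succ m ih =>
    obtain ⟨A, h1, h2, h3⟩ := ih (by omega)
    have hne : (S \ A).Nonempty := by
      rw [← Finset.card_pos, Finset.card_sdiff_of_subset h1]
      omega
    obtain ⟨x, hx, hmax⟩ := Finset.exists_max_image (S \ A) g hne
    rw [Finset.mem_sdiff] at hx
    refine ⟨insert x A, ?_, ?_, ?_⟩
    · exact Finset.insert_subset hx.1 h1
    · rw [Finset.card_insert_of_notMem hx.2, h2]
    · intro p hp q hq hqA
      rw [Finset.mem_insert, not_or] at hqA
      rcases Finset.mem_insert.1 hp with rfl | hp
      · exact hmax q (by simp [hq, hqA.2])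
      · exact h3 p hp q hq hqA.2

theorem val_between [DecidableEq P] {S : Finset P} {m : ℕ} {g : P → ℝ} {A' B : Finset P} (k : ℕ)
    (hA' : Val S m g A') (hk' : k ≤ (A' ∩ B).card) :
    ∀ (j : ℕ) (A : Finset P), (A' \ A).card = j → Val S m g A → (A ∩ B).card ≤ k →
      ∃ C, Val S m g C ∧ (C ∩ B).card = k := by
  intro j
  induction j with
  | zero =>
    intro A hj hA hk
    have hsub : A' ⊆ A := by
      rw [Finset.card_eq_zero, Finset.sdiff_eq_empty_iff_subset] at hj
      exact hj
    have : A' = A := Finset.eq_of_subset_of_card_le hsub (by rw [hA.2.1, hA'.2.1])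
    subst this
    exact ⟨A', hA', le_antisymm hk hk'⟩
  | succ j ih =>
    intro A hj hA hk
    rcases hk.eq_or_lt with h | h
    · exact ⟨A, hA, h⟩
    have c2 : (A \ A').card = (A' \ A).card :=
      Finset.card_sdiff_comm (by rw [hA.2.1, hA'.2.1])
    obtain ⟨p, hp⟩ := Finset.card_pos.1 (show 0 < (A' \ A).card by omega)
    obtain ⟨q, hq⟩ := Finset.card_pos.1 (show 0 < (A \ A').card by omega)
    rw [Finset.mem_sdiff] at hp hq
    have hpS := hA'.1 hp.1
    have hqS := hA.1 hq.1
    have e1 : g q ≤ g p := hA'.2.2 p hp.1 q hqS hq.2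
    have e2 : g p ≤ g q := hA.2.2 q hq.1 p hpS hp.2
    have hpe : p ∉ A.erase q := fun hh => hp.2 (Finset.mem_of_mem_erase hh)
    refine ih (insert p (A.erase q)) ?_ ⟨?_, ?_, ?_⟩ ?_
    · have : A' \ insert p (A.erase q) = (A' \ A).erase p := by
        ext x
        simp only [Finset.mem_sdiff, Finset.mem_insert, Finset.mem_erase]
        constructor
        · rintro ⟨h1, h2⟩
          refine ⟨fun hh => h2 (Or.inl hh), h1, fun hh => h2 (Or.inr ⟨?_, hh⟩)⟩
          rintro rfl
          exact hq.2 h1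
        · rintro ⟨h1, h2, h3⟩
          exact ⟨h2, fun hh => hh.elim h1 (fun h4 => h3 h4.2)⟩
      rw [this, Finset.card_erase_of_mem (by simp [hp]), hj]
      rfl
    · exact Finset.insert_subset hpS ((Finset.erase_subset _ _).trans hA.1)
    · rw [Finset.card_insert_of_notMem hpe, Finset.card_erase_add_one hq.1, hA.2.1]
    · intro x hx y hy hyn
      have hyp : g y ≤ g q := by
        by_cases hyA : y ∈ A
        · have : y = q := by
            by_contra hne
            exact hyn (Finset.mem_insert_of_mem (Finset.mem_erase.2 ⟨hne, hyA⟩))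
          rw [this]
        · exact hA.2.2 q hq.1 y hy hyA
      rcases Finset.mem_insert.1 hx with rfl | hx
      · linarith
      · by_cases hyA : y ∈ A
        · have : y = q := by
            by_contra hne
            exact hyn (Finset.mem_insert_of_mem (Finset.mem_erase.2 ⟨hne, hyA⟩))
          subst this
          have := hA.2.2 x (Finset.mem_of_mem_erase hx) p hpS hp.2
          linarith
        · exact hA.2.2 x (Finset.mem_of_mem_erase hx) y hy hyA
    · have hsub : insert p (A.erase q) ∩ B ⊆ insert p (A ∩ B) := by
        intro x hx
        simp only [Finset.mem_inter, Finset.mem_insert, Finset.mem_erase] at hx ⊢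
        tauto
      have := (Finset.card_le_card hsub).trans (Finset.card_insert_le _ _)
      omega

/-- Rotated coordinates. -/
noncomputable def cx (x y : P → ℝ) (θ : ℝ) (p : P) : ℝ := Real.cos θ * x p + Real.sin θ * y p

/-- Rotated coordinates. -/
noncomputable def cy (x y : P → ℝ) (θ : ℝ) (p : P) : ℝ := - Real.sin θ * x p + Real.cos θ * y p

theorem val_closed (S A : Finset P) (m : ℕ) (G : ℝ → P → ℝ) (hG : ∀ p, Continuous fun θ => G θ p) :
    IsClosed {θ | Val S m (G θ) A} := by
  have : {θ | Val S m (G θ) A} = {_θ : ℝ | A ⊆ S ∧ A.card = m} ∩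
      ⋂ p ∈ A, ⋂ q ∈ S, ⋂ _ : q ∉ A, {θ | G θ q ≤ G θ p} := by
    ext θ
    simp only [Val, Set.mem_ofPred_eq, Set.mem_inter_iff, Set.mem_iInter, and_assoc]
  rw [this]
  exact isClosed_const.inter (isClosed_iInter fun p => isClosed_iInter fun _ =>
    isClosed_iInter fun q => isClosed_iInter fun _ => isClosed_iInter fun _ =>
      isClosed_le (hG q) (hG p))

theorem closed_aux [DecidableEq P] (S : Finset P) (m : ℕ) (F G : ℝ → P → ℝ)
    (hF : ∀ p, Continuous fun θ => F θ p)
    (hG : ∀ p, Continuous fun θ => G θ p) (R : ℕ → Prop) :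
    IsClosed {θ | ∃ A B, Val S m (F θ) A ∧ Val S m (G θ) B ∧ R (A ∩ B).card} := by
  have : {θ | ∃ A B, Val S m (F θ) A ∧ Val S m (G θ) B ∧ R (A ∩ B).card} =
      ⋃ A ∈ S.powerset, ⋃ B ∈ S.powerset,
        ({θ | Val S m (F θ) A} ∩ ({θ | Val S m (G θ) B} ∩ {_θ | R (A ∩ B).card})) := by
    ext θ
    simp only [Set.mem_ofPred_eq, Set.mem_iUnion, Set.mem_inter_iff, Finset.mem_powerset]
    constructor
    · rintro ⟨A, B, h1, h2, h3⟩
      exact ⟨A, h1.1, B, h2.1, h1, h2, h3⟩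
    · rintro ⟨A, _, B, _, h1, h2, h3⟩
      exact ⟨A, B, h1, h2, h3⟩
  rw [this]
  refine isClosed_biUnion_finset fun A _ => isClosed_biUnion_finset fun B _ => ?_
  exact (val_closed S A m F hF).inter ((val_closed S B m G hG).inter isClosed_const)

theorem val_compl [DecidableEq P] {S A : Finset P} {m : ℕ} {g : P → ℝ} (hS : S.card = 2 * m)
    (h : Val S m g A) : Val S m (fun p => - g p) (S \ A) := by
  refine ⟨Finset.sdiff_subset, ?_, ?_⟩
  · rw [Finset.card_sdiff_of_subset h.1, h.2.1]; omega
  · intro p hp q hq hqn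
    rw [Finset.mem_sdiff] at hp hqn
    have hqA : q ∈ A := by
      by_contra hh; exact hqn ⟨hq, hh⟩
    exact neg_le_neg (h.2.2 q hqA p hp.1 hp.2)

theorem exists_partition [DecidableEq P] (S : Finset P) (m : ℕ) (hS : S.card = 2 * m)
    (x y : P → ℝ) :
    ∃ θ A B, Val S m (cx x y θ) A ∧ Val S m (cy x y θ) B ∧ (A ∩ B).card = m / 2 := by
  have hF : ∀ p, Continuous fun θ => cx x y θ p := fun p => by unfold cx; fun_prop
  have hG : ∀ p, Continuous fun θ => cy x y θ p := fun p => by unfold cy; fun_prop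
  have hT := closed_aux S m (cx x y) (cy x y) hF hG (fun j => j ≤ m / 2)
  have hU := closed_aux S m (cx x y) (cy x y) hF hG (fun j => m / 2 ≤ j)
  set T := {θ | ∃ A B, Val S m (cx x y θ) A ∧ Val S m (cy x y θ) B ∧ (A ∩ B).card ≤ m / 2}
  set U := {θ | ∃ A B, Val S m (cx x y θ) A ∧ Val S m (cy x y θ) B ∧ m / 2 ≤ (A ∩ B).card}
  have hcov : (Set.univ : Set ℝ) ⊆ T ∪ U := by
    intro θ _
    obtain ⟨A, hA⟩ := exists_val S (cx x y θ) m (by omega)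
    obtain ⟨B, hB⟩ := exists_val S (cy x y θ) m (by omega)
    rcases le_total (A ∩ B).card (m / 2) with h | h
    · exact Or.inl ⟨A, B, hA, hB, h⟩
    · exact Or.inr ⟨A, B, hA, hB, h⟩
  have hne : T.Nonempty ∧ U.Nonempty := by
    obtain ⟨A, hA⟩ := exists_val S (cx x y 0) m (by omega)
    obtain ⟨B, hB⟩ := exists_val S (cy x y 0) m (by omega)
    have e1 : cx x y (π / 2) = cy x y 0 := by ext p; simp [cx, cy]
    have e2 : cy x y (π / 2) = fun p => - cx x y 0 p := by ext p; simp [cx, cy]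
    have hA' := val_compl hS hA
    rw [← e2] at hA'
    have hB' := hB
    rw [← e1] at hB'
    have hc : (B ∩ (S \ A)).card + (A ∩ B).card = m := by
      have : B ∩ (S \ A) = B \ A := by
        ext z
        simp only [Finset.mem_inter, Finset.mem_sdiff]
        exact ⟨fun h => ⟨h.1, h.2.2⟩, fun h => ⟨h.1, hB.1 h.1, h.2⟩⟩
      rw [this, Finset.inter_comm, Finset.card_sdiff_add_card_inter, hB.2.1]
    rcases le_total (A ∩ B).card (m / 2) with h | h
    · exact ⟨⟨0, A, B, hA, hB, h⟩, ⟨π / 2, B, S \ A, hB', hA', by omega⟩⟩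
    · by_cases h2 : (A ∩ B).card = m / 2
      · exact ⟨⟨0, A, B, hA, hB, h2.le⟩, ⟨0, A, B, hA, hB, h⟩⟩
      · exact ⟨⟨π / 2, B, S \ A, hB', hA', by omega⟩, ⟨0, A, B, hA, hB, h⟩⟩
  obtain ⟨θ, _, ⟨A, B, hA, hB, hk⟩, ⟨A', B', hA', hB', hk'⟩⟩ :=
    isPreconnected_closed_iff.1 isPreconnected_univ T U hT hU hcov
      (by simpa using hne.1) (by simpa using hne.2)
  rcases le_total (m / 2) (A' ∩ B).card with h | h
  · obtain ⟨C, hC, hCk⟩ := val_between (m / 2) hA' h _ A rfl hA hk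
    exact ⟨θ, C, B, hC, hB, hCk⟩
  · rw [Finset.inter_comm] at h hk'
    obtain ⟨C, hC, hCk⟩ := val_between (m / 2) hB' hk' _ B rfl hB h
    rw [Finset.inter_comm] at hCk
    exact ⟨θ, A', C, hA', hC, hCk⟩

theorem exists_tour [DecidableEq P] (S : Finset P) (m : ℕ) (hS : S.card = 2 * m) (hm : 8 ≤ m)
    (x y : P → ℝ) : ∃ θ L, Tour (cx x y θ) (cy x y θ) L ∧ L.Perm S.toList := by
  obtain ⟨θ, A, B, hA, hB, hk⟩ := exists_partition S m hS x y
  have i1 : (A \ B).card + (A ∩ B).card = m := by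
    rw [Finset.card_sdiff_add_card_inter, hA.2.1]
  have i2 : (B \ A).card + (A ∩ B).card = m := by
    rw [Finset.inter_comm, Finset.card_sdiff_add_card_inter, hB.2.1]
  have hsub : A ∪ B ⊆ S := Finset.union_subset hA.1 hB.1
  have i3 : (S \ (A ∪ B)).card + (A ∪ B).card = 2 * m := by
    rw [Finset.card_sdiff_add_card_eq_card hsub, hS]
  have i4 : (A ∪ B).card + (A ∩ B).card = 2 * m := by
    rw [Finset.card_union_add_card_inter, hA.2.1, hB.2.1]; omega
  refine ⟨θ, (A ∩ B).toList ++ (B \ A).toList ++ (S \ (A ∪ B)).toList ++ (A \ B).toList,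
    tour_cfg ?_ ?_ ?_ ?_ ?_, ?_⟩
  · have fA : ∀ p ∈ A, ∀ q ∈ S, q ∉ A → cx x y θ q ≤ cx x y θ p := hA.2.2
    have fB : ∀ p ∈ B, ∀ q ∈ S, q ∉ B → cy x y θ q ≤ cy x y θ p := hB.2.2
    have sA := hA.1
    have sB := hB.1
    constructor <;> intro p hp q hq <;>
      simp only [Finset.mem_toList, Finset.mem_inter, Finset.mem_sdiff, Finset.mem_union,
        not_or] at hp hq
    · exact fA p hp.1 q (sB hq.1) hq.2
    · exact fA p hp.1 q hq.1 hq.2.1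
    · exact fA p hp.1 q (sB hq.1) hq.2
    · exact fA p hp.1 q hq.1 hq.2.1
    · exact fB p hp.2 q hq.1 hq.2.2
    · exact fB p hp.2 q (sA hq.1) hq.2
    · exact fB p hp.1 q hq.1 hq.2.2
    · exact fB p hp.1 q (sA hq.1) hq.2
  · simp only [Finset.length_toList]; omega
  · simp only [Finset.length_toList]; omega
  · simp only [Finset.length_toList]; omega
  · simp only [Finset.length_toList]; omega
  · have nd : ((A ∩ B).toList ++ (B \ A).toList ++ (S \ (A ∪ B)).toList ++
        (A \ B).toList).Nodup := by
      simp only [List.nodup_append', Finset.nodup_toList, List.disjoint_left, true_and, and_true,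
        List.mem_append, Finset.mem_toList, Finset.mem_inter, Finset.mem_sdiff, Finset.mem_union]
      tauto
    rw [List.perm_ext_iff_of_nodup nd (Finset.nodup_toList S)]
    intro z
    have sA := @hA.1 z
    have sB := @hB.1 z
    simp only [List.mem_append, Finset.mem_toList, Finset.mem_inter, Finset.mem_sdiff,
      Finset.mem_union]
    tauto

theorem Ac_get {X Y : P → ℝ} : ∀ (l : List P), Ac X Y l → ∀ i p q r, l[i]? = some p →
    l[i + 1]? = some q → l[i + 2]? = some r → gd X Y p q r
  | [], _, i, p, q, r, h1, _, _ => by simp at h1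
  | [_], _, i, p, q, r, _, h2, _ => by simp at h2
  | [_, _], _, i, p, q, r, _, _, h3 => by simp at h3
  | a :: b :: c :: l, h, 0, p, q, r, h1, h2, h3 => by
    simp at h1 h2 h3
    subst h1 h2 h3
    exact h.1
  | a :: b :: c :: l, h, i + 1, p, q, r, h1, h2, h3 =>
    Ac_get (b :: c :: l) h.2 i p q r (by simpa using h1) (by simpa using h2) (by simpa using h3)

theorem tour_fun {X Y : P → ℝ} {L : List P} {n : ℕ} (hn : 3 ≤ n) (hlen : L.length = n)
    (hnd : L.Nodup) (hT : Tour X Y L) : ∃ f : ZMod n → P, Function.Injective f ∧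
      (∀ z, z ∈ Set.range f ↔ z ∈ L) ∧ ∀ i, gd X Y (f (i - 1)) (f i) (f (i + 1)) := by
  obtain ⟨p, q, t, hp, hA⟩ := hT
  have : NeZero n := ⟨by omega⟩
  have : Fact (1 < n) := ⟨by omega⟩
  set M := p :: q :: t with hM
  have hMl : M.length = n := by rw [hp.length_eq, hlen]
  have hMn : M.Nodup := hp.nodup_iff.2 hnd
  let f : ZMod n → P := fun i => M[i.val]'(by rw [hMl]; exact ZMod.val_lt i)
  have hf : ∀ i : ZMod n, M[i.val]? = some (f i) := fun i => List.getElem?_eq_getElem _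
  have key : ∀ j, j < n + 2 → (M ++ [p, q])[j]? = some (f (j : ZMod n)) := by
    intro j hj
    by_cases h : j < n
    · rw [List.getElem?_append_left (by omega), ← hf, ZMod.val_natCast_of_lt h]
    · rw [List.getElem?_append_right (by omega), hMl, ← hf]
      obtain rfl | rfl : j = n ∨ j = n + 1 := by omega
      · simp [hM]
      · simp [hM, ZMod.val_one]
  refine ⟨f, ?_, ?_, ?_⟩
  · intro i j hij
    have := (List.Nodup.getElem_inj_iff hMn).1 hij
    exact ZMod.val_injective n this
  · intro z
    rw [← hp.mem_iff, List.mem_iff_getElem]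
    constructor
    · rintro ⟨i, rfl⟩
      exact ⟨i.val, by rw [hMl]; exact ZMod.val_lt i, rfl⟩
    · rintro ⟨j, hj, rfl⟩
      refine ⟨(j : ZMod n), ?_⟩
      have h2 := hf (j : ZMod n)
      rw [ZMod.val_natCast_of_lt (by omega), List.getElem?_eq_getElem hj] at h2
      exact (Option.some.inj h2).symm
  · intro i
    obtain ⟨j, hj, rfl⟩ : ∃ j, j < n ∧ i = (j : ZMod n) + 1 :=
      ⟨(i - 1).val, ZMod.val_lt _, by simp⟩
    have h0 := key j (by omega)
    have h1 := key (j + 1) (by omega)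
    have h2 := key (j + 2) (by omega)
    have := Ac_get _ hA j _ _ _ h0 h1 h2
    convert this using 2
    · ring
    · push_cast; ring
    · push_cast; ring

end AcuteTour

/-- **Acute spanning tours** (Fekete–Woeginger conjecture): for every even `n ≥ 20`,
every set of `n` points in the plane admits a spanning tour (Hamiltonian cycle,
encoded as an injective map from `ZMod n` onto the point set) all of whose
rotation angles are at most `π/2`. -/
theorem acute_spanning_tour_of_even_ge_twenty
    (n : ℕ) (hn : 20 ≤ n) (heven : Even n)
    (S : Finset (EuclideanSpace ℝ (Fin 2))) (hcard : S.card = n) :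
    ∃ f : ZMod n → EuclideanSpace ℝ (Fin 2),
      Function.Injective f ∧ Set.range f = ↑S ∧
      ∀ i : ZMod n,
        EuclideanGeometry.angle (f (i - 1)) (f i) (f (i + 1)) ≤ π / 2 := by
  classical
  obtain ⟨m, hm⟩ := heven
  obtain ⟨θ, L, hT, hL⟩ := AcuteTour.exists_tour S m (by omega) (by omega)
    (fun p => p 0) (fun p => p 1)
  obtain ⟨f, h1, h2, h3⟩ := AcuteTour.tour_fun (n := n) (by omega)
    (by rw [hL.length_eq, Finset.length_toList, hcard])
    (hL.nodup_iff.2 (Finset.nodup_toList S)) hT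
  refine ⟨f, h1, ?_, ?_⟩
  · ext z
    rw [h2, hL.mem_iff, Finset.mem_toList, Finset.mem_coe]
  · intro i
    have h := h3 i
    unfold EuclideanGeometry.angle InnerProductGeometry.angle
    rw [Real.arccos_le_pi_div_two]
    refine div_nonneg ?_ (by positivity)
    generalize f (i - 1) = p at *
    generalize f i = q at *
    generalize f (i + 1) = r at *
    have e : inner ℝ (p -ᵥ q) (r -ᵥ q) =
        (p 0 - q 0) * (r 0 - q 0) + (p 1 - q 1) * (r 1 - q 1) := by
      simp [PiLp.inner_apply, Fin.sum_univ_two]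
      ring
    rw [e]
    unfold AcuteTour.gd AcuteTour.cx AcuteTour.cy at h
    have hcs := Real.sin_sq_add_cos_sq θ
    have e2 : (p 0 - q 0) * (r 0 - q 0) + (p 1 - q 1) * (r 1 - q 1) =
      (Real.sin θ ^ 2 + Real.cos θ ^ 2) *
        ((p 0 - q 0) * (r 0 - q 0) + (p 1 - q 1) * (r 1 - q 1)) := by rw [hcs, one_mul]
    rw [e2]
    refine h.trans (le_of_eq ?_)
    ring
end

section
/- Given a set S of n points in the plane (n even), one can always find two orthogonal lines ℓ₁, ℓ₂ and a partition S = S₁ ∪ S₂ ∪ S₃ ∪ S₄ with |S₁| = |S₃| = ⌊n/4⌋ and |S₂| = |S₄| = ⌈n/4⌉ such that S₁ and S₃ belong to two opposite closed quadrants determined by ℓ₁ and ℓ₂, and S₂ and S₄ belong to the other two opposite closed quadrants. -/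
open EuclideanGeometry Real RealInnerProductSpace

noncomputable section

abbrev Plane := EuclideanSpace ℝ (Fin 2)

/-- The rotation of a vector of the plane by `π/2`. -/
noncomputable def rot90 (u : Plane) : Plane :=
  (WithLp.equiv 2 (Fin 2 → ℝ)).symm ![-(u 1), u 0]

def IsLow (S : Finset Plane) (m : ℕ) (f : Plane → ℝ) (L : Finset Plane) : Prop :=
  L ⊆ S ∧ L.card = m ∧ ∀ p ∈ L, ∀ q ∈ S, q ∉ L → f p ≤ f q

lemma exists_low (S : Finset Plane) (f : Plane → ℝ) (m : ℕ) (hm : m ≤ S.card) :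
    ∃ L, IsLow S m f L := by
  classical
  induction m with
  | zero => exact ⟨∅, by simp [IsLow]⟩
  | succ m ih =>
    obtain ⟨L, hLS, hc, hL⟩ := ih (by omega)
    have hne : (S \ L).Nonempty := by
      rw [← Finset.card_pos, Finset.card_sdiff_of_subset hLS]; omega
    obtain ⟨a, ha, hmin⟩ := Finset.exists_min_image (S \ L) f hne
    rw [Finset.mem_sdiff] at ha
    refine ⟨insert a L, Finset.insert_subset ha.1 hLS, ?_, ?_⟩
    · rw [Finset.card_insert_of_notMem ha.2, hc]
    · intro p hp q hq hqn
      rw [Finset.mem_insert, not_or] at hqn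
      rcases Finset.mem_insert.1 hp with rfl | hp
      · exact hmin q (Finset.mem_sdiff.2 ⟨hq, hqn.2⟩)
      · exact hL p hp q hq hqn.2

lemma low_exchange (S : Finset Plane) (f : Plane → ℝ) (m k : ℕ) (B L' : Finset Plane)
    (hL' : IsLow S m f L') (hk' : k ≤ (L' ∩ B).card) :
    ∀ (d : ℕ) (L : Finset Plane), (L \ L').card = d → IsLow S m f L → (L ∩ B).card ≤ k →
      ∃ L'', IsLow S m f L'' ∧ (L'' ∩ B).card = k := by
  classical
  intro d
  induction d with
  | zero =>
    intro L hd hL hk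
    have hsub : L ⊆ L' := by
      rw [Finset.card_eq_zero, Finset.sdiff_eq_empty_iff_subset] at hd; exact hd
    have : L = L' := Finset.eq_of_subset_of_card_le hsub (by rw [hL.2.1, hL'.2.1])
    subst this
    exact ⟨L, hL, by omega⟩
  | succ d ih =>
    intro L hd hL hk
    rcases hk.eq_or_lt with hk | hk
    · exact ⟨L, hL, hk⟩
    have hd' : (L' \ L).card = d + 1 := by
      have h1 := Finset.card_sdiff_add_card_inter L L'
      have h2 := Finset.card_sdiff_add_card_inter L' L
      rw [Finset.inter_comm L' L] at h2
      have := hL.2.1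
      have := hL'.2.1
      omega
    obtain ⟨p, hp⟩ := Finset.card_pos.1 (by omega : 0 < (L \ L').card)
    obtain ⟨q, hq⟩ := Finset.card_pos.1 (by omega : 0 < (L' \ L).card)
    rw [Finset.mem_sdiff] at hp hq
    have hpq : f p = f q := le_antisymm (hL.2.2 p hp.1 q (hL'.1 hq.1) hq.2)
      (hL'.2.2 q hq.1 p (hL.1 hp.1) hp.2)
    have hqe : q ∉ L.erase p := fun h => hq.2 (Finset.mem_of_mem_erase h)
    have hcp : 0 < L.card := Finset.card_pos.2 ⟨p, hp.1⟩
    refine ih (insert q (L.erase p)) ?_ ⟨?_, ?_, ?_⟩ ?_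
    · have : insert q (L.erase p) \ L' = (L \ L').erase p := by
        ext x
        simp only [Finset.mem_sdiff, Finset.mem_insert, Finset.mem_erase]
        constructor
        · rintro ⟨rfl | h, h2⟩
          · exact absurd hq.1 h2
          · tauto
        · tauto
      rw [this, Finset.card_erase_of_mem (Finset.mem_sdiff.2 hp), hd]; rfl
    · exact Finset.insert_subset (hL'.1 hq.1) ((Finset.erase_subset _ _).trans hL.1)
    · rw [Finset.card_insert_of_notMem hqe, Finset.card_erase_of_mem hp.1, ← hL.2.1]; omega
    · intro x hx y hy hyn
      have hx' : ∃ x' ∈ L, f x = f x' := by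
        rcases Finset.mem_insert.1 hx with rfl | h
        · exact ⟨p, hp.1, hpq.symm⟩
        · exact ⟨x, Finset.mem_of_mem_erase h, rfl⟩
      have hy' : ∃ y' ∈ S, y' ∉ L ∧ f y = f y' := by
        by_cases h : y = p
        · exact ⟨q, hL'.1 hq.1, hq.2, by rw [h, hpq]⟩
        · refine ⟨y, hy, fun hyL => hyn ?_, rfl⟩
          exact Finset.mem_insert_of_mem (Finset.mem_erase.2 ⟨h, hyL⟩)
      obtain ⟨x', h1, h2⟩ := hx'
      obtain ⟨y', h3, h4, h5⟩ := hy'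
      rw [h2, h5]
      exact hL.2.2 x' h1 y' h3 h4
    · have : insert q (L.erase p) ∩ B ⊆ insert q (L ∩ B) := by
        intro x
        simp only [Finset.mem_inter, Finset.mem_insert, Finset.mem_erase]
        tauto
      have h1 := Finset.card_le_card this
      have h2 := Finset.card_insert_le q (L ∩ B)
      omega

lemma low_interval (S : Finset Plane) (f g : Plane → ℝ) (m k : ℕ) (L B L' B' : Finset Plane)
    (hL : IsLow S m f L) (hB : IsLow S m g B) (hL' : IsLow S m f L') (hB' : IsLow S m g B')
    (h : (L ∩ B).card ≤ k) (h' : k ≤ (L' ∩ B').card) :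
    ∃ L B, IsLow S m f L ∧ IsLow S m g B ∧ (L ∩ B).card = k := by
  classical
  rcases le_total k (L' ∩ B).card with hc | hc
  · obtain ⟨M, hM, hM'⟩ := low_exchange S f m k B L' hL' hc _ L rfl hL h
    exact ⟨M, B, hM, hB, hM'⟩
  · obtain ⟨M, hM, hM'⟩ := low_exchange S g m k L' B' hB' (by rwa [Finset.inter_comm]) _ B rfl hB
      (by rwa [Finset.inter_comm])
    exact ⟨L', M, hL', hM, by rwa [Finset.inter_comm]⟩

lemma exists_threshold (S : Finset Plane) (f : Plane → ℝ) (m : ℕ) (L : Finset Plane)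
    (hL : IsLow S m f L) : ∃ c : ℝ, (∀ p ∈ L, f p ≤ c) ∧ ∀ q ∈ S, q ∉ L → c ≤ f q := by
  rcases L.eq_empty_or_nonempty with rfl | hne
  · rcases S.eq_empty_or_nonempty with rfl | hS
    · exact ⟨0, by simp⟩
    · obtain ⟨a, ha, hmin⟩ := Finset.exists_min_image S f hS
      exact ⟨f a, by simp, fun q hq _ => hmin q hq⟩
  · obtain ⟨a, ha, hmax⟩ := Finset.exists_max_image L f hne
    exact ⟨f a, hmax, fun q hq hn => hL.2.2 a ha q hq hn⟩

/-- coordinate along direction `θ` -/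
def fA (θ : ℝ) (p : Plane) : ℝ := cos θ * p 0 + sin θ * p 1

lemma isClosed_low (S : Finset Plane) (m : ℕ) (t : ℝ) (L : Finset Plane) :
    IsClosed {θ : ℝ | IsLow S m (fA (θ + t)) L} := by
  have hcont : ∀ p : Plane, Continuous fun θ : ℝ => fA (θ + t) p := by
    intro p; unfold fA; fun_prop
  simp only [IsLow, Set.setOf_and, Set.setOf_forall]
  refine isClosed_const.inter (isClosed_const.inter ?_)
  refine isClosed_iInter fun p => isClosed_iInter fun _ => isClosed_iInter fun q =>
    isClosed_iInter fun _ => isClosed_iInter fun _ => isClosed_le (hcont p) (hcont q)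

lemma isClosed_pairs (S : Finset Plane) (m : ℕ) (P : ℕ → Prop) :
    IsClosed {θ : ℝ | ∃ L B, IsLow S m (fA (θ + 0)) L ∧ IsLow S m (fA (θ + π / 2)) B ∧
      P (L ∩ B).card} := by
  have : {θ : ℝ | ∃ L B, IsLow S m (fA (θ + 0)) L ∧ IsLow S m (fA (θ + π / 2)) B ∧
      P (L ∩ B).card} = ⋃ L ∈ S.powerset, ⋃ B ∈ S.powerset,
        ({θ : ℝ | IsLow S m (fA (θ + 0)) L} ∩ ({θ : ℝ | IsLow S m (fA (θ + π / 2)) B} ∩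
          {_θ : ℝ | P (L ∩ B).card})) := by
    ext θ
    simp only [Set.mem_setOf_eq, Set.mem_iUnion, Finset.mem_powerset, Set.mem_inter_iff,
      exists_prop]
    constructor
    · rintro ⟨L, B, h1, h2, h3⟩
      exact ⟨L, h1.1, B, h2.1, h1, h2, h3⟩
    · rintro ⟨L, _, B, _, h1, h2, h3⟩
      exact ⟨L, B, h1, h2, h3⟩
  rw [this]
  refine isClosed_biUnion_finset fun L _ => isClosed_biUnion_finset fun B _ => ?_
  exact (isClosed_low S m 0 L).inter ((isClosed_low S m _ B).inter isClosed_const)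

lemma exists_angle (S : Finset Plane) (m k : ℕ) (hS : S.card = 2 * m)
    (hk : m = 2 * k ∨ m = 2 * k + 1) :
    ∃ (θ : ℝ) (L B : Finset Plane), IsLow S m (fA θ) L ∧ IsLow S m (fA (θ + π / 2)) B ∧
      (L ∩ B).card = k := by
  classical
  have key := isPreconnected_closed_iff.1 (isPreconnected_univ (α := ℝ)) _ _
    (isClosed_pairs S m (fun a => a ≤ k)) (isClosed_pairs S m (fun a => k ≤ a))
  have hex : ∀ θ : ℝ, ∃ L B, IsLow S m (fA (θ + 0)) L ∧ IsLow S m (fA (θ + π / 2)) B := by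
    intro θ
    obtain ⟨L, hL⟩ := exists_low S (fA (θ + 0)) m (by omega)
    obtain ⟨B, hB⟩ := exists_low S (fA (θ + π / 2)) m (by omega)
    exact ⟨L, B, hL, hB⟩
  have hrot : ∀ L B, IsLow S m (fA (0 + 0)) L → IsLow S m (fA (0 + π / 2)) B →
      ∃ L' B', IsLow S m (fA (π / 2 + 0)) L' ∧ IsLow S m (fA (π / 2 + π / 2)) B' ∧
      (L ∩ B).card + (L' ∩ B').card = m := by
    intro L B hL hB
    refine ⟨B, S \ L, ?_, ⟨Finset.sdiff_subset, ?_, ?_⟩, ?_⟩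
    · rw [zero_add] at hB; rwa [add_zero]
    · rw [Finset.card_sdiff_of_subset hL.1, hL.2.1]; omega
    · intro p hp q hq hqn
      rw [Finset.mem_sdiff] at hp hqn
      have hqL : q ∈ L := by by_contra h; exact hqn ⟨hq, h⟩
      have := hL.2.2 q hqL p hp.1 hp.2
      simp only [fA, add_halves, Real.cos_pi, Real.sin_pi, add_zero, Real.cos_zero,
        Real.sin_zero] at this ⊢
      linarith
    · have : B ∩ (S \ L) = B \ L := by
        ext x
        simp only [Finset.mem_inter, Finset.mem_sdiff]
        constructor
        · tauto
        · rintro ⟨h1, h2⟩; exact ⟨h1, hB.1 h1, h2⟩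
      rw [this, Finset.inter_comm, add_comm, Finset.card_sdiff_add_card_inter, hB.2.1]
  obtain ⟨L, B, hL, hB⟩ := hex 0
  obtain ⟨L', B', hL', hB', hsum⟩ := hrot L B hL hB
  have hcov : (Set.univ : Set ℝ) ⊆ {θ : ℝ | ∃ L B, IsLow S m (fA (θ + 0)) L ∧
      IsLow S m (fA (θ + π / 2)) B ∧ (L ∩ B).card ≤ k} ∪ {θ : ℝ | ∃ L B,
      IsLow S m (fA (θ + 0)) L ∧ IsLow S m (fA (θ + π / 2)) B ∧ k ≤ (L ∩ B).card} := by
    intro θ _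
    obtain ⟨L, B, hL, hB⟩ := hex θ
    rcases le_total (L ∩ B).card k with h | h
    · exact Or.inl ⟨L, B, hL, hB, h⟩
    · exact Or.inr ⟨L, B, hL, hB, h⟩
  have hres : ∃ θ : ℝ, (∃ L B, IsLow S m (fA (θ + 0)) L ∧
      IsLow S m (fA (θ + π / 2)) B ∧ (L ∩ B).card ≤ k) ∧ (∃ L B,
      IsLow S m (fA (θ + 0)) L ∧ IsLow S m (fA (θ + π / 2)) B ∧ k ≤ (L ∩ B).card) := by
    rcases le_or_gt (L ∩ B).card k with h | h
    · obtain ⟨θ, -, h1, h2⟩ := key hcov ⟨0, trivial, L, B, hL, hB, h⟩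
        ⟨π / 2, trivial, L', B', hL', hB', by omega⟩
      exact ⟨θ, h1, h2⟩
    · obtain ⟨θ, -, h1, h2⟩ := key hcov ⟨π / 2, trivial, L', B', hL', hB', by omega⟩
        ⟨0, trivial, L, B, hL, hB, h.le⟩
      exact ⟨θ, h1, h2⟩
  obtain ⟨θ, ⟨L1, B1, a1, a2, a3⟩, ⟨L2, B2, b1, b2, b3⟩⟩ := hres
  obtain ⟨M, N, c1, c2, c3⟩ := low_interval S _ _ m k L1 B1 L2 B2 a1 a2 b1 b2 a3 b3
  rw [add_zero] at c1
  exact ⟨θ, M, N, c1, c2, c3⟩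

/-- **Equitable partition by two orthogonal lines**: for a set `S` of `n` points in the
plane (`n` even) there are two orthogonal lines (described by their intersection point `c`,
a unit direction `u` and its rotation `rot90 u` by `π/2`) and a partition
`S = S₁ ∪ S₂ ∪ S₃ ∪ S₄` with `|S₁| = |S₃| = ⌊n/4⌋` and `|S₂| = |S₄| = ⌈n/4⌉` such that
`S₁, S₂, S₃, S₄` belong to the four closed quadrants determined by the two lines,
`S₁` and `S₃` in two opposite quadrants, `S₂` and `S₄` in the other two. -/
theorem equitable_partition_two_orthogonal_lines
    (n : ℕ) (hn : Even n) (S : Finset Plane) (hcard : S.card = n) :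
    ∃ (c u : Plane), ‖u‖ = 1 ∧
      ∃ S₁ S₂ S₃ S₄ : Finset Plane,
        (↑S : Set Plane) = ↑S₁ ∪ ↑S₂ ∪ ↑S₃ ∪ ↑S₄ ∧
        Disjoint S₁ S₂ ∧ Disjoint S₁ S₃ ∧ Disjoint S₁ S₄ ∧
        Disjoint S₂ S₃ ∧ Disjoint S₂ S₄ ∧ Disjoint S₃ S₄ ∧
        S₁.card = n / 4 ∧ S₃.card = n / 4 ∧
        S₂.card = (n + 3) / 4 ∧ S₄.card = (n + 3) / 4 ∧
        (∀ p ∈ S₁, 0 ≤ ⟪p - c, u⟫ ∧ 0 ≤ ⟪p - c, rot90 u⟫) ∧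
        (∀ p ∈ S₂, ⟪p - c, u⟫ ≤ 0 ∧ 0 ≤ ⟪p - c, rot90 u⟫) ∧
        (∀ p ∈ S₃, ⟪p - c, u⟫ ≤ 0 ∧ ⟪p - c, rot90 u⟫ ≤ 0) ∧
        (∀ p ∈ S₄, 0 ≤ ⟪p - c, u⟫ ∧ ⟪p - c, rot90 u⟫ ≤ 0) := by
  classical
  obtain ⟨m, hm⟩ := hn
  obtain ⟨θ, L, B, hL, hB, hLB⟩ := exists_angle S m (n / 4) (by omega) (by omega)
  obtain ⟨a, ha1, ha2⟩ := exists_threshold S _ m L hL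
  obtain ⟨b, hb1, hb2⟩ := exists_threshold S _ m B hB
  have hsc := Real.sin_sq_add_cos_sq θ
  have hf : ∀ p : Plane, ⟪p - !₂[a * cos θ - b * sin θ, a * sin θ + b * cos θ],
      (!₂[cos θ, sin θ] : Plane)⟫ = fA θ p - a := by
    intro p
    simp [PiLp.inner_apply, Fin.sum_univ_two, fA]
    linear_combination (-a) * hsc
  have hg : ∀ p : Plane, ⟪p - !₂[a * cos θ - b * sin θ, a * sin θ + b * cos θ],
      rot90 (!₂[cos θ, sin θ] : Plane)⟫ = fA (θ + π / 2) p - b := by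
    intro p
    simp [PiLp.inner_apply, Fin.sum_univ_two, fA, rot90, Real.cos_add_pi_div_two,
      Real.sin_add_pi_div_two]
    linear_combination (-b) * hsc
  refine ⟨!₂[a * cos θ - b * sin θ, a * sin θ + b * cos θ], !₂[cos θ, sin θ], ?_,
    S \ (L ∪ B), L \ B, L ∩ B, B \ L, ?_⟩
  · rw [EuclideanSpace.norm_eq]
    simp [Fin.sum_univ_two]
  simp only [hf, hg, sub_nonneg, sub_nonpos]
  have c1 := Finset.card_sdiff_add_card_inter L B
  have c2 := Finset.card_sdiff_add_card_inter B L
  have c3 := Finset.card_union_add_card_inter L B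
  have c4 := Finset.card_sdiff_of_subset (Finset.union_subset hL.1 hB.1)
  have c5 := hL.2.1
  have c6 := hB.2.1
  rw [Finset.inter_comm B L] at c2
  refine ⟨?_, ?_, ?_, ?_, ?_, ?_, ?_, by omega, by omega, by omega, by omega, ?_, ?_, ?_, ?_⟩
  · ext x
    have h1 := @hL.1 x
    have h2 := @hB.1 x
    simp only [Set.mem_union, Finset.mem_coe, Finset.mem_sdiff, Finset.mem_union,
      Finset.mem_inter]
    tauto
  iterate 6
    · rw [Finset.disjoint_left]
      intro x
      simp only [Finset.mem_sdiff, Finset.mem_union, Finset.mem_inter]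
      tauto
  · intro p hp
    simp only [Finset.mem_sdiff, Finset.mem_union, not_or] at hp
    exact ⟨ha2 p hp.1 hp.2.1, hb2 p hp.1 hp.2.2⟩
  · intro p hp
    rw [Finset.mem_sdiff] at hp
    exact ⟨ha1 p hp.1, hb2 p (hL.1 hp.1) hp.2⟩
  · intro p hp
    rw [Finset.mem_inter] at hp
    exact ⟨ha1 p hp.1, hb1 p hp.2⟩
  · intro p hp
    rw [Finset.mem_sdiff] at hp
    exact ⟨ha2 p (hB.1 hp.1) hp.2, hb1 p hp.1⟩
end
end

section
/- Let {p, q, r, s} be a concave-obtuse quadruple with center s. Then all six angles ∠pqs, ∠qps, ∠qrs, ∠rqs, ∠rps, and ∠prs are acute (strictly less than π/2). -/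
open EuclideanGeometry Real

noncomputable section

/-- In a triangle with an obtuse angle at `s`, the other two angles are acute. -/
theorem acute_of_obtuse_apex (a b s : Plane) (h : a ≠ s)
    (hab : π / 2 < EuclideanGeometry.angle a s b) :
    EuclideanGeometry.angle a b s < π / 2 ∧ EuclideanGeometry.angle b a s < π / 2 := by
  have h1 := EuclideanGeometry.angle_add_angle_add_angle_eq_pi b h
  have h2 := EuclideanGeometry.angle_nonneg a b s
  have h3 := EuclideanGeometry.angle_nonneg b a s
  rw [EuclideanGeometry.angle_comm s a b, EuclideanGeometry.angle_comm b s a] at h1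
  constructor <;> linarith

/-- In a concave-obtuse quadruple `{p, q, r, s}` with center `s` (i.e. `s` lies in the interior
of the triangle `pqr` and all three angles at `s` towards the other points exceed `π/2`),
the six angles `∠pqs`, `∠qps`, `∠qrs`, `∠rqs`, `∠rps`, `∠prs` are strictly acute. -/
theorem concaveObtuse_six_acute_angles
    (p q r s : Plane)
    (hne : p ≠ q ∧ p ≠ r ∧ p ≠ s ∧ q ≠ r ∧ q ≠ s ∧ r ≠ s)
    (hcenter : s ∈ interior (convexHull ℝ ({p, q, r} : Set Plane)))
    (hpq : π / 2 < EuclideanGeometry.angle p s q)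
    (hqr : π / 2 < EuclideanGeometry.angle q s r)
    (hrp : π / 2 < EuclideanGeometry.angle r s p) :
    EuclideanGeometry.angle p q s < π / 2 ∧ EuclideanGeometry.angle q p s < π / 2 ∧
    EuclideanGeometry.angle q r s < π / 2 ∧ EuclideanGeometry.angle r q s < π / 2 ∧
    EuclideanGeometry.angle r p s < π / 2 ∧ EuclideanGeometry.angle p r s < π / 2 := by
  obtain ⟨-, -, hps, -, hqs, hrs⟩ := hne
  obtain ⟨h1, h2⟩ := acute_of_obtuse_apex p q s hps hpq
  obtain ⟨h3, h4⟩ := acute_of_obtuse_apex q r s hqs hqr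
  obtain ⟨h5, h6⟩ := acute_of_obtuse_apex r p s hrs hrp
  exact ⟨h1, h2, h3, h4, h5, h6⟩
end
end

section
/- Let P = {p₁, p₂, p₃, p₄} be a quadruple of distinct points such that p_i lies in the closed quadrant Q_i for i = 1, 2, 3, 4. If P is concave-obtuse, then P is upward, downward, leftward, or rightward. -/
open EuclideanGeometry Real

noncomputable section

/-- The four closed quadrants of the plane. -/
def InQ1 (p : Plane) : Prop := 0 ≤ p 0 ∧ 0 ≤ p 1
def InQ2 (p : Plane) : Prop := p 0 ≤ 0 ∧ 0 ≤ p 1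
def InQ3 (p : Plane) : Prop := p 0 ≤ 0 ∧ p 1 ≤ 0
def InQ4 (p : Plane) : Prop := 0 ≤ p 0 ∧ p 1 ≤ 0

/-- A quadruple is concave-obtuse: one of the points (the center) lies in the interior of the
triangle formed by the other three, and all three angles at the center formed by connecting
the center to the other three points are greater than `π/2`. -/
def ConcaveObtuse (p₁ p₂ p₃ p₄ : Plane) : Prop :=
  ∃ c a b d : Plane, ({c, a, b, d} : Set Plane) = ({p₁, p₂, p₃, p₄} : Set Plane) ∧
    c ∈ interior (convexHull ℝ ({a, b, d} : Set Plane)) ∧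
    π / 2 < EuclideanGeometry.angle a c b ∧ π / 2 < EuclideanGeometry.angle a c d ∧
    π / 2 < EuclideanGeometry.angle b c d

/-- The path `p₂p₄p₃p₁` is acute. -/
def Upward (p₁ p₂ p₃ p₄ : Plane) : Prop :=
  EuclideanGeometry.angle p₂ p₄ p₃ ≤ π / 2 ∧ EuclideanGeometry.angle p₄ p₃ p₁ ≤ π / 2

/-- The path `p₃p₁p₂p₄` is acute. -/
def Downward (p₁ p₂ p₃ p₄ : Plane) : Prop :=
  EuclideanGeometry.angle p₃ p₁ p₂ ≤ π / 2 ∧ EuclideanGeometry.angle p₁ p₂ p₄ ≤ π / 2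

/-- The path `p₂p₄p₁p₃` is acute. -/
def Leftward (p₁ p₂ p₃ p₄ : Plane) : Prop :=
  EuclideanGeometry.angle p₂ p₄ p₁ ≤ π / 2 ∧ EuclideanGeometry.angle p₄ p₁ p₃ ≤ π / 2

/-- The path `p₁p₃p₂p₄` is acute. -/
def Rightward (p₁ p₂ p₃ p₄ : Plane) : Prop :=
  EuclideanGeometry.angle p₁ p₃ p₂ ≤ π / 2 ∧ EuclideanGeometry.angle p₃ p₂ p₄ ≤ π / 2

/-- A triangle with an obtuse angle at `c` has a non-obtuse angle at `a`. -/
theorem angle_le_of_obtuse {a b c : Plane} (hab : a ≠ b) (h : π / 2 < EuclideanGeometry.angle a c b) :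
    EuclideanGeometry.angle c a b ≤ π / 2 := by
  have h1 := EuclideanGeometry.angle_add_angle_add_angle_eq_pi (p₁ := a) (p₂ := b) c hab.symm
  have h2 := EuclideanGeometry.angle_nonneg c a b
  have h3 := EuclideanGeometry.angle_nonneg a b c
  rw [EuclideanGeometry.angle_comm a c b] at h
  rw [EuclideanGeometry.angle_comm c a b] at *
  rw [EuclideanGeometry.angle_comm a b c] at *
  linarith

/-- At most one angle of a triangle is obtuse. -/
theorem angle_le_or {a b c : Plane} (hab : a ≠ b) :
    EuclideanGeometry.angle c a b ≤ π / 2 ∨ EuclideanGeometry.angle a b c ≤ π / 2 := by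
  by_contra! hh
  have h1 := EuclideanGeometry.angle_add_angle_add_angle_eq_pi (p₁ := a) (p₂ := b) c hab.symm
  have h2 := EuclideanGeometry.angle_nonneg b c a
  linarith [hh.1, hh.2]

/-- A concave-obtuse quadruple with one point in each closed quadrant is upward, downward,
leftward, or rightward. -/
theorem concaveObtuse_quadruple_direction
    (p₁ p₂ p₃ p₄ : Plane)
    (hne : p₁ ≠ p₂ ∧ p₁ ≠ p₃ ∧ p₁ ≠ p₄ ∧ p₂ ≠ p₃ ∧ p₂ ≠ p₄ ∧ p₃ ≠ p₄)
    (h1 : InQ1 p₁) (h2 : InQ2 p₂) (h3 : InQ3 p₃) (h4 : InQ4 p₄)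
    (h : ConcaveObtuse p₁ p₂ p₃ p₄) :
    Upward p₁ p₂ p₃ p₄ ∨ Downward p₁ p₂ p₃ p₄ ∨
    Leftward p₁ p₂ p₃ p₄ ∨ Rightward p₁ p₂ p₃ p₄ := by
  obtain ⟨c, a, b, d, hset, -, hab, had, hbd⟩ := h
  have key : ∀ x ∈ ({p₁, p₂, p₃, p₄} : Set Plane), ∀ y ∈ ({p₁, p₂, p₃, p₄} : Set Plane),
      x ≠ c → y ≠ c → x ≠ y → π / 2 < EuclideanGeometry.angle x c y := by
    rw [← hset]
    have hba := hab
    have hda := had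
    have hdb := hbd
    rw [EuclideanGeometry.angle_comm] at hba hda hdb
    rintro x (rfl | rfl | rfl | rfl) y (rfl | rfl | rfl | rfl) h1 h2 h3 <;>
      first | assumption | exact absurd rfl ‹_›
  have hc : c ∈ ({p₁, p₂, p₃, p₄} : Set Plane) := by
    rw [← hset]; simp
  have m1 : p₁ ∈ ({p₁, p₂, p₃, p₄} : Set Plane) := by simp
  have m2 : p₂ ∈ ({p₁, p₂, p₃, p₄} : Set Plane) := by simp
  have m3 : p₃ ∈ ({p₁, p₂, p₃, p₄} : Set Plane) := by simp
  have m4 : p₄ ∈ ({p₁, p₂, p₃, p₄} : Set Plane) := by simp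
  obtain ⟨n12, n13, n14, n23, n24, n34⟩ := hne
  clear hset hab had hbd
  rcases hc with rfl | rfl | rfl | rfl
  · rcases angle_le_or (c := p₃) n24 with h | h
    · have := angle_le_of_obtuse n23.symm (key _ m3 _ m2 n13.symm n12.symm n23.symm)
      exact Or.inr (Or.inr (Or.inr ⟨this, h⟩))
    · have := angle_le_of_obtuse n34 (key _ m3 _ m4 n13.symm n14.symm n34)
      rw [EuclideanGeometry.angle_comm] at this
      exact Or.inl ⟨h, this⟩
  · rcases angle_le_or (c := p₄) n13 with h | h
    · have := angle_le_of_obtuse n14.symm (key _ m4 _ m1 n24.symm n12 n14.symm)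
      exact Or.inr (Or.inr (Or.inl ⟨this, h⟩))
    · have := angle_le_of_obtuse n34.symm (key _ m4 _ m3 n24.symm n23.symm n34.symm)
      rw [EuclideanGeometry.angle_comm] at h
      exact Or.inl ⟨this, h⟩
  · rcases angle_le_or (c := p₁) n24 with h | h
    · have := angle_le_of_obtuse n12 (key _ m1 _ m2 n13 n23 n12)
      exact Or.inr (Or.inl ⟨this, h⟩)
    · have := angle_le_of_obtuse n14 (key _ m1 _ m4 n13 n34.symm n14)
      rw [EuclideanGeometry.angle_comm] at this
      exact Or.inr (Or.inr (Or.inl ⟨h, this⟩))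
  · rcases angle_le_or (c := p₂) n13 with h | h
    · have := angle_le_of_obtuse n12.symm (key _ m2 _ m1 n24 n14 n12.symm)
      rw [EuclideanGeometry.angle_comm] at h this
      exact Or.inr (Or.inl ⟨h, this⟩)
    · have := angle_le_of_obtuse n23 (key _ m2 _ m3 n24 n34 n23)
      rw [EuclideanGeometry.angle_comm] at this
      exact Or.inr (Or.inr (Or.inr ⟨h, this⟩))
end
end

section
/- Let p, q, r, s be four points in strictly convex position that appear in this cyclic order along the boundary of their convex hull. Then the 4-cycle p r s q p is acute or the 4-cycle p r q s p is acute. -/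
open EuclideanGeometry Real

noncomputable section

/-- Four points are in strictly convex position: each is a vertex of their convex hull
and no three of them are collinear. -/
def StrictlyConvexPos (p₁ p₂ p₃ p₄ : Plane) : Prop :=
  (∀ x ∈ ({p₁, p₂, p₃, p₄} : Set Plane),
      x ∉ convexHull ℝ (({p₁, p₂, p₃, p₄} : Set Plane) \ {x})) ∧
  (∀ x ∈ ({p₁, p₂, p₃, p₄} : Set Plane), ∀ y ∈ ({p₁, p₂, p₃, p₄} : Set Plane),
      ∀ z ∈ ({p₁, p₂, p₃, p₄} : Set Plane),
      x ≠ y → y ≠ z → x ≠ z → ¬ Collinear ℝ ({x, y, z} : Set Plane))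

/-- If `o - y = a • (x - y)`-style data is given with the crossing angle at least a right angle,
then the angle at `y` is at most a right angle. -/
theorem angle_aux (x y z w v : Plane) (a c : ℝ) (ha : 0 ≤ a) (hc : 0 ≤ c)
    (hx : x - y = c • v + a • w) (hz : z - y = w) (h : 0 ≤ inner ℝ v w) :
    EuclideanGeometry.angle x y z ≤ π / 2 ∧ EuclideanGeometry.angle z y x ≤ π / 2 := by
  have key : EuclideanGeometry.angle x y z ≤ π / 2 := by
    unfold EuclideanGeometry.angle
    rw [InnerProductGeometry.angle, Real.arccos_le_pi_div_two]
    simp only [vsub_eq_sub]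
    rw [hx, hz]
    refine div_nonneg ?_ (by positivity)
    rw [inner_add_left, real_inner_smul_left, real_inner_smul_left]
    exact add_nonneg (mul_nonneg hc h) (mul_nonneg ha real_inner_self_nonneg)
  exact ⟨key, by rw [EuclideanGeometry.angle_comm]; exact key⟩

/-- Let `p, q, r, s` be four points in strictly convex position appearing in this cyclic order
along the boundary of their convex hull (equivalently, the diagonals `pr` and `qs` cross).
Then the 4-cycle `prsqp` is acute or the 4-cycle `prqsp` is acute. -/
theorem convex_position_acute_four_cycle
    (p q r s : Plane)
    (hne : p ≠ q ∧ p ≠ r ∧ p ≠ s ∧ q ≠ r ∧ q ≠ s ∧ r ≠ s)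
    (hconv : StrictlyConvexPos p q r s)
    (horder : (segment ℝ p r ∩ segment ℝ q s).Nonempty) :
    (EuclideanGeometry.angle q p r ≤ π / 2 ∧ EuclideanGeometry.angle p r s ≤ π / 2 ∧
     EuclideanGeometry.angle r s q ≤ π / 2 ∧ EuclideanGeometry.angle s q p ≤ π / 2) ∨
    (EuclideanGeometry.angle s p r ≤ π / 2 ∧ EuclideanGeometry.angle p r q ≤ π / 2 ∧
     EuclideanGeometry.angle r q s ≤ π / 2 ∧ EuclideanGeometry.angle q s p ≤ π / 2) := by
  obtain ⟨o, ⟨b, a, hb, ha, hba, ho1⟩, ⟨d, c, hd, hc, hdc, ho2⟩⟩ := horder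
  have e : b • p + a • r = d • q + c • s := ho1.trans ho2.symm
  obtain rfl : b = 1 - a := by linarith
  obtain rfl : d = 1 - c := by linarith
  have e' : q - p = c • (q - s) + a • (r - p) := by
    first | linear_combination (norm := module) (1 : ℝ) • e | linear_combination (norm := module) (-1 : ℝ) • e
  rcases le_total 0 (inner ℝ (q - s) (r - p)) with h | h
  · left
    have h' : 0 ≤ inner ℝ (s - q) (p - r) := by
      rw [← neg_sub q s, ← neg_sub r p, inner_neg_neg]; exact h
    refine ⟨(angle_aux q p r (r - p) (q - s) a c ha hc e' rfl h).1,
      (angle_aux s r p (p - r) (s - q) (1 - a) (1 - c) hb hd ?_ rfl h').2,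
      (angle_aux r s q (q - s) (r - p) (1 - c) (1 - a) hd hb ?_ rfl
        (by rw [real_inner_comm]; exact h)).1,
      (angle_aux p q s (s - q) (p - r) c a hc ha ?_ rfl
        (by rw [real_inner_comm]; exact h')).2⟩
    · first | linear_combination (norm := module) (1 : ℝ) • e | linear_combination (norm := module) (-1 : ℝ) • e
    · first | linear_combination (norm := module) (1 : ℝ) • e | linear_combination (norm := module) (-1 : ℝ) • e
    · first | linear_combination (norm := module) (1 : ℝ) • e | linear_combination (norm := module) (-1 : ℝ) • e
  · right
    have h1 : 0 ≤ inner ℝ (s - q) (r - p) := by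
      rw [← neg_sub q s, inner_neg_left]; linarith
    have h2 : 0 ≤ inner ℝ (q - s) (p - r) := by
      rw [← neg_sub r p, inner_neg_right]; linarith
    refine ⟨(angle_aux s p r (r - p) (s - q) a (1 - c) ha hd ?_ rfl h1).1,
      (angle_aux q r p (p - r) (q - s) (1 - a) c hb hc ?_ rfl h2).2,
      (angle_aux r q s (s - q) (r - p) c (1 - a) hc hb ?_ rfl
        (by rw [real_inner_comm]; exact h1)).1,
      (angle_aux p s q (q - s) (p - r) (1 - c) a hd ha ?_ rfl
        (by rw [real_inner_comm]; exact h2)).2⟩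
    · first | linear_combination (norm := module) (1 : ℝ) • e | linear_combination (norm := module) (-1 : ℝ) • e
    · first | linear_combination (norm := module) (1 : ℝ) • e | linear_combination (norm := module) (-1 : ℝ) • e
    · first | linear_combination (norm := module) (1 : ℝ) • e | linear_combination (norm := module) (-1 : ℝ) • e
    · first | linear_combination (norm := module) (1 : ℝ) • e | linear_combination (norm := module) (-1 : ℝ) • e
end
end

section
/- Let {p, q, r, s} be a concave quadruple with center s, and suppose the angle ∠psq is at most π/2. Then the 4-cycle p s q r p is acute; in particular ∠rps, ∠psq, ∠sqr and ∠qrp are all at most π/2. -/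
open EuclideanGeometry Real

noncomputable section

/-- An angle is at most `π / 2` iff the corresponding inner product is nonnegative. -/
lemma angle_le_iff_inner (a b c : Plane) :
    EuclideanGeometry.angle a b c ≤ π / 2 ↔ 0 ≤ inner ℝ (a - b) (c - b) := by
  change Real.arccos (inner ℝ (a - b) (c - b) / (‖a - b‖ * ‖c - b‖)) ≤ π / 2 ↔ _
  rw [Real.arccos_le_pi_div_two]
  constructor
  · intro h
    rcases (mul_nonneg (norm_nonneg (a - b)) (norm_nonneg (c - b))).lt_or_eq with h1 | h1
    · have := mul_nonneg h h1.le
      rwa [div_mul_cancel₀ _ h1.ne'] at this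
    · have := abs_real_inner_le_norm (a - b) (c - b)
      rw [← h1] at this
      exact (abs_eq_zero.1 (le_antisymm this (abs_nonneg _))).ge
  · intro h
    positivity

/-- The vector form of the statement, with the center at the origin. -/
lemma vector_core (P Q R : Plane) (hP : P ≠ 0) (hQ : Q ≠ 0) (a b c : ℝ)
    (ha : 0 ≤ a) (hb : 0 ≤ b) (hc : 0 ≤ c) (hsum : a + b + c = 1)
    (h0 : a • P + b • Q + c • R = 0) (hPQ : 0 ≤ inner ℝ P Q) :
    inner ℝ R P ≤ 0 ∧ inner ℝ R Q ≤ 0 := by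
  have hPP : 0 < inner ℝ P P := real_inner_self_pos.2 hP
  have hQQ : 0 < inner ℝ Q Q := real_inner_self_pos.2 hQ
  have hQP : inner ℝ Q P = inner ℝ P Q := real_inner_comm _ _
  have e1 : a * inner ℝ P P + b * inner ℝ P Q + c * inner ℝ R P = 0 := by
    have := congrArg (fun v => inner ℝ v P) h0
    simpa [inner_add_left, real_inner_smul_left, hQP] using this
  have e2 : a * inner ℝ P Q + b * inner ℝ Q Q + c * inner ℝ R Q = 0 := by
    have := congrArg (fun v => inner ℝ v Q) h0
    simpa [inner_add_left, real_inner_smul_left] using this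
  have k1 := mul_nonneg ha hPP.le
  have k2 := mul_nonneg hb hPQ
  have k3 := mul_nonneg ha hPQ
  have k4 := mul_nonneg hb hQQ.le
  have hc' : 0 < c := by
    rcases hc.lt_or_eq with h | h
    · exact h
    · subst h
      have a0 : a * inner ℝ P P = 0 := by linarith
      have b0 : b * inner ℝ Q Q = 0 := by linarith
      have a1 := (mul_eq_zero.1 a0).resolve_right hPP.ne'
      have b1 := (mul_eq_zero.1 b0).resolve_right hQQ.ne'
      linarith
  constructor
  · by_contra! h
    have := mul_pos hc' h
    linarith
  · by_contra! h
    have := mul_pos hc' h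
    linarith

/-- Let `{p, q, r, s}` be a concave quadruple with center `s` (i.e. `s` lies in the interior of
the triangle `pqr`), and suppose `∠psq ≤ π/2`. Then the 4-cycle `psqrp` is acute: the angles
`∠rps`, `∠psq`, `∠sqr`, `∠qrp` are all at most `π/2`. -/
theorem concave_acute_four_cycle
    (p q r s : Plane)
    (hne : p ≠ q ∧ p ≠ r ∧ p ≠ s ∧ q ≠ r ∧ q ≠ s ∧ r ≠ s)
    (hcenter : s ∈ interior (convexHull ℝ ({p, q, r} : Set Plane)))
    (hpsq : EuclideanGeometry.angle p s q ≤ π / 2) :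
    EuclideanGeometry.angle r p s ≤ π / 2 ∧ EuclideanGeometry.angle p s q ≤ π / 2 ∧
    EuclideanGeometry.angle s q r ≤ π / 2 ∧ EuclideanGeometry.angle q r p ≤ π / 2 := by
  obtain ⟨-, -, hps, -, hqs, -⟩ := hne
  have hs := interior_subset hcenter
  rw [convexHull_insert (by simp)] at hs
  simp only [convexHull_pair, mem_convexJoin, Set.mem_singleton_iff, exists_eq_left] at hs
  obtain ⟨y, ⟨u, v, hu, hv, huv, rfl⟩, ⟨a, t, ha, ht, hat, hse⟩⟩ := hs
  have h0 : a • (p - s) + (t * u) • (q - s) + (t * v) • (r - s) = 0 := by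
    have hsum : a + t * u + t * v = 1 := by rw [add_assoc, ← mul_add, huv, mul_one, hat]
    have : a • (p - s) + (t * u) • (q - s) + (t * v) • (r - s)
        = (a • p + t • (u • q + v • r)) - (a + t * u + t * v) • s := by module
    rw [this, hsum, hse, one_smul, sub_self]
  rw [angle_le_iff_inner] at hpsq
  obtain ⟨h1, h2⟩ := vector_core (p - s) (q - s) (r - s) (sub_ne_zero.2 hps) (sub_ne_zero.2 hqs)
    a (t * u) (t * v) ha (mul_nonneg ht hu) (mul_nonneg ht hv)
    (by rw [add_assoc, ← mul_add, huv, mul_one, hat]) h0 hpsq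
  have hp := real_inner_self_nonneg (x := p - s)
  have hq := real_inner_self_nonneg (x := q - s)
  have hr := real_inner_self_nonneg (x := r - s)
  refine ⟨?_, (angle_le_iff_inner _ _ _).2 hpsq, ?_, ?_⟩
  · rw [angle_le_iff_inner]
    have : inner ℝ (r - p) (s - p) = inner ℝ (p - s) (p - s) - inner ℝ (r - s) (p - s) := by
      rw [← inner_sub_left, ← inner_neg_neg]; congr 1 <;> abel
    linarith
  · rw [angle_le_iff_inner, real_inner_comm]
    have : inner ℝ (r - q) (s - q) = inner ℝ (q - s) (q - s) - inner ℝ (r - s) (q - s) := by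
      rw [← inner_sub_left, ← inner_neg_neg]; congr 1 <;> abel
    linarith
  · rw [angle_le_iff_inner]
    have : inner ℝ (q - r) (p - r) = inner ℝ (p - s) (q - s) - inner ℝ (r - s) (q - s)
        - inner ℝ (r - s) (p - s) + inner ℝ (r - s) (r - s) := by
      have e1 : q - r = (q - s) - (r - s) := by abel
      have e2 : p - r = (p - s) - (r - s) := by abel
      rw [e1, e2, inner_sub_left, inner_sub_right (q - s) (p - s) (r - s),
        inner_sub_right (r - s) (p - s) (r - s),
        real_inner_comm (p - s) (q - s), real_inner_comm (r - s) (q - s)]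
      ring
    linarith
end
end

section
/- Let S₁, S₂, S₃, S₄ be pairwise disjoint finite sets of points in ℝ² with S_i ⊆ Q_i for i = 1, 2, 3, 4, |S₁| = |S₃| ≥ 2 and |S₂| = |S₄| ≥ 2, and let S = S₁ ∪ S₂ ∪ S₃ ∪ S₄. Suppose there exist points p_i, q_i ∈ S_i for i = 1, 2, 3, 4 with {p₁, p₂, p₃, p₄} ∩ {q₁, q₂, q₃, q₄} = ∅, such that the path p₁p₃p₄p₂ is acute and the path q₄q₂q₁q₃ is acute. Then S admits an acute spanning tour. -/
open EuclideanGeometry Real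

noncomputable section

/-- All consecutive angles of a list of points are at most a right angle. -/
def AcuteL : List Plane → Prop
  | a :: b :: c :: l => EuclideanGeometry.angle a b c ≤ π / 2 ∧ AcuteL (b :: c :: l)
  | _ => True

/-- Interleaving of two lists. -/
def zig : List Plane → List Plane → List Plane
  | x :: l, y :: m => x :: y :: zig l m
  | _, _ => []

theorem zig_perm : ∀ l m : List Plane, l.length = m.length → (zig l m).Perm (l ++ m)
  | [], [], _ => by simp [zig]
  | [], _ :: _, h => by simp at h
  | _ :: _, [], h => by simp at h
  | x :: l, y :: m, h => by
    have ih := zig_perm l m (by simpa using h)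
    simp only [zig, List.cons_append]
    exact ((ih.cons y).trans List.perm_middle.symm).cons x

theorem acuteL_zig (P Q : Plane → Prop)
    (hPQ : ∀ a b c, P a → Q b → P c → EuclideanGeometry.angle a b c ≤ π / 2)
    (hQP : ∀ a b c, Q a → P b → Q c → EuclideanGeometry.angle a b c ≤ π / 2)
    (c d : Plane) (hc : P c) (hd : Q d) (r : List Plane) (hr : AcuteL (c :: d :: r)) :
    ∀ (l m : List Plane) (a b : Plane), P a → Q b → (∀ x ∈ l, P x) → (∀ x ∈ m, Q x) →
      AcuteL (a :: b :: (zig l m ++ c :: d :: r))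
  | [], _, a, b, ha, hb, _, _ => by
    simp only [zig, List.nil_append]
    exact ⟨hPQ _ _ _ ha hb hc, hQP _ _ _ hb hc hd, hr⟩
  | _ :: _, [], a, b, ha, hb, _, _ => by
    simp only [zig, List.nil_append]
    exact ⟨hPQ _ _ _ ha hb hc, hQP _ _ _ hb hc hd, hr⟩
  | x :: l, y :: m, a, b, ha, hb, hl, hm => by
    simp only [zig, List.cons_append]
    have hx := hl x (by simp)
    have hy := hm y (by simp)
    exact ⟨hPQ _ _ _ ha hb hx, hQP _ _ _ hb hx hy,
      acuteL_zig P Q hPQ hQP c d hc hd r hr l m x y hx hy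
        (fun z hz => hl z (by simp [hz])) (fun z hz => hm z (by simp [hz]))⟩

theorem AcuteL.get : ∀ (l : List Plane), AcuteL l → ∀ k, k + 2 < l.length →
    EuclideanGeometry.angle (l.getD k 0) (l.getD (k+1) 0) (l.getD (k+2) 0) ≤ π / 2
  | [], _, k, hk => by simp at hk
  | [_], _, k, hk => by simp at hk
  | [_, _], _, k, hk => by simp at hk
  | a :: b :: c :: l, h, 0, _ => by simpa using h.1
  | a :: b :: c :: l, h, k + 1, hk => by
    have := AcuteL.get (b :: c :: l) h.2 k (by simp at hk ⊢; omega)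
    simpa using this

theorem cyc (n : ℕ) (a b : Plane) (l : List Plane) (hn : n = (a :: b :: l).length)
    (h : AcuteL ((a :: b :: l) ++ [a, b])) (hnd : (a :: b :: l).Nodup) :
    ∃ f : ZMod n → Plane,
      Function.Injective f ∧ Set.range f = {x | x ∈ a :: b :: l} ∧
      ∀ i : ZMod n, EuclideanGeometry.angle (f (i - 1)) (f i) (f (i + 1)) ≤ π / 2 := by
  have hn2 : 2 ≤ n := by simp at hn; omega
  haveI : NeZero n := ⟨by omega⟩
  set L := a :: b :: l with hL
  have key : ∀ k, k < n + 2 → L.getD (k : ZMod n).val 0 = (L ++ [a, b]).getD k 0 := by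
    intro k hk
    rw [ZMod.val_natCast]
    by_cases hkn : k < n
    · rw [Nat.mod_eq_of_lt hkn, List.getD_append _ _ _ _ (by omega)]
    · obtain ⟨j, rfl⟩ : ∃ j, k = n + j := ⟨k - n, by omega⟩
      rw [Nat.add_mod_left, Nat.mod_eq_of_lt (by omega),
        List.getD_append_right _ _ _ _ (by omega)]
      have : n + j - L.length = j := by omega
      rw [this]
      have : j = 0 ∨ j = 1 := by omega
      rcases this with rfl | rfl <;> simp [hL]
  refine ⟨fun i => L.getD i.val 0, ?_, ?_, ?_⟩
  · intro i j hij
    have hi := ZMod.val_lt i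
    have hj := ZMod.val_lt j
    simp only at hij
    rw [List.getD_eq_getElem _ _ (by omega), List.getD_eq_getElem _ _ (by omega)] at hij
    exact ZMod.val_injective n ((hnd.getElem_inj_iff).1 hij)
  · ext x
    simp only [Set.mem_range, Set.mem_ofPred_eq]
    constructor
    · rintro ⟨i, rfl⟩
      have hi := ZMod.val_lt i
      rw [List.getD_eq_getElem _ _ (by omega)]
      exact List.getElem_mem _
    · intro hx
      obtain ⟨k, hk, rfl⟩ := List.getElem_of_mem hx
      refine ⟨(k : ZMod n), ?_⟩
      rw [ZMod.val_natCast, Nat.mod_eq_of_lt (by omega), List.getD_eq_getElem _ _ hk]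
  · intro i
    obtain ⟨k, hk, hki⟩ : ∃ k, k < n ∧ (k : ZMod n) = i - 1 :=
      ⟨(i - 1).val, ZMod.val_lt _, by simp⟩
    have e1 : i = ((k + 1 : ℕ) : ZMod n) := by push_cast; rw [hki]; ring
    have e2 : i + 1 = ((k + 2 : ℕ) : ZMod n) := by push_cast; rw [hki]; ring
    have hk2 : k + 2 < (L ++ [a, b]).length := by
      rw [List.length_append, ← hn]
      simpa using hk
    have := AcuteL.get _ h k hk2
    rw [← key k (by omega), ← key (k+1) (by omega), ← key (k+2) (by omega)] at this
    rw [← hki, e2]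
    convert this using 3

theorem angle_le_of (a b c : Plane)
    (h0 : 0 ≤ (a 0 - b 0) * (c 0 - b 0)) (h1 : 0 ≤ (a 1 - b 1) * (c 1 - b 1)) :
    EuclideanGeometry.angle a b c ≤ π / 2 := by
  unfold EuclideanGeometry.angle
  unfold InnerProductGeometry.angle
  rw [Real.arccos_le_pi_div_two]
  refine div_nonneg ?_ (by positivity)
  simp [PiLp.inner_apply, Fin.sum_univ_two]
  nlinarith

theorem ang131 (a b c) (ha : InQ1 a) (hb : InQ3 b) (hc : InQ1 c) :
    EuclideanGeometry.angle a b c ≤ π / 2 := by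
  obtain ⟨_, _⟩ := ha; obtain ⟨_, _⟩ := hb; obtain ⟨_, _⟩ := hc
  exact angle_le_of a b c (mul_nonneg (by linarith) (by linarith))
    (mul_nonneg (by linarith) (by linarith))

theorem ang313 (a b c) (ha : InQ3 a) (hb : InQ1 b) (hc : InQ3 c) :
    EuclideanGeometry.angle a b c ≤ π / 2 := by
  obtain ⟨_, _⟩ := ha; obtain ⟨_, _⟩ := hb; obtain ⟨_, _⟩ := hc
  exact angle_le_of a b c (mul_nonneg_of_nonpos_of_nonpos (by linarith) (by linarith))
    (mul_nonneg_of_nonpos_of_nonpos (by linarith) (by linarith))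

theorem ang242 (a b c) (ha : InQ2 a) (hb : InQ4 b) (hc : InQ2 c) :
    EuclideanGeometry.angle a b c ≤ π / 2 := by
  obtain ⟨_, _⟩ := ha; obtain ⟨_, _⟩ := hb; obtain ⟨_, _⟩ := hc
  exact angle_le_of a b c (mul_nonneg_of_nonpos_of_nonpos (by linarith) (by linarith))
    (mul_nonneg (by linarith) (by linarith))

theorem ang424 (a b c) (ha : InQ4 a) (hb : InQ2 b) (hc : InQ4 c) :
    EuclideanGeometry.angle a b c ≤ π / 2 := by
  obtain ⟨_, _⟩ := ha; obtain ⟨_, _⟩ := hb; obtain ⟨_, _⟩ := hc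
  exact angle_le_of a b c (mul_nonneg (by linarith) (by linarith))
    (mul_nonneg_of_nonpos_of_nonpos (by linarith) (by linarith))

theorem split_two (T : Finset Plane) (p q : Plane) (hp : p ∈ T) (hq : q ∈ T) (hpq : p ≠ q) :
    ∃ l : List Plane, T.card = l.length + 2 ∧ ∀ x, x ∈ T ↔ x = p ∨ x = q ∨ x ∈ l := by
  classical
  refine ⟨((T.erase p).erase q).toList, ?_, ?_⟩
  · have hq' : q ∈ T.erase p := Finset.mem_erase.2 ⟨hpq.symm, hq⟩
    have := Finset.card_erase_add_one hq'
    have := Finset.card_erase_add_one hp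
    rw [Finset.length_toList]; omega
  · intro x
    simp only [Finset.mem_toList, Finset.mem_erase]
    by_cases h1 : x = p
    · simp [h1, hp]
    · by_cases h2 : x = q <;> simp [h1, h2, hq]

/-- **Case 1 of the construction.** If `S = S₁ ∪ S₂ ∪ S₃ ∪ S₄` with `Sᵢ` in the `i`-th closed
quadrant, `|S₁| = |S₃| ≥ 2`, `|S₂| = |S₄| ≥ 2`, and there are disjoint quadruples
`{p₁,p₂,p₃,p₄}` and `{q₁,q₂,q₃,q₄}` with `pᵢ, qᵢ ∈ Sᵢ` such that the paths `p₁p₃p₄p₂` and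
`q₄q₂q₁q₃` are acute, then `S` admits an acute spanning tour. -/
theorem acute_tour_of_upward_and_downward
    (S₁ S₂ S₃ S₄ S : Finset Plane)
    (hQ1 : ∀ p ∈ S₁, InQ1 p) (hQ2 : ∀ p ∈ S₂, InQ2 p)
    (hQ3 : ∀ p ∈ S₃, InQ3 p) (hQ4 : ∀ p ∈ S₄, InQ4 p)
    (hd12 : Disjoint S₁ S₂) (hd13 : Disjoint S₁ S₃) (hd14 : Disjoint S₁ S₄)
    (hd23 : Disjoint S₂ S₃) (hd24 : Disjoint S₂ S₄) (hd34 : Disjoint S₃ S₄)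
    (hc13 : S₁.card = S₃.card) (hc24 : S₂.card = S₄.card)
    (h1 : 2 ≤ S₁.card) (h2 : 2 ≤ S₂.card)
    (hS : (↑S : Set Plane) = ↑S₁ ∪ ↑S₂ ∪ ↑S₃ ∪ ↑S₄)
    (p₁ p₂ p₃ p₄ q₁ q₂ q₃ q₄ : Plane)
    (hp₁ : p₁ ∈ S₁) (hp₂ : p₂ ∈ S₂) (hp₃ : p₃ ∈ S₃) (hp₄ : p₄ ∈ S₄)
    (hq₁ : q₁ ∈ S₁) (hq₂ : q₂ ∈ S₂) (hq₃ : q₃ ∈ S₃) (hq₄ : q₄ ∈ S₄)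
    (hdisj : ({p₁, p₂, p₃, p₄} : Set Plane) ∩ ({q₁, q₂, q₃, q₄} : Set Plane) = ∅)
    (hP : EuclideanGeometry.angle p₁ p₃ p₄ ≤ π / 2 ∧
          EuclideanGeometry.angle p₃ p₄ p₂ ≤ π / 2)
    (hQ : EuclideanGeometry.angle q₄ q₂ q₁ ≤ π / 2 ∧
          EuclideanGeometry.angle q₂ q₁ q₃ ≤ π / 2) :
    ∃ f : ZMod S.card → Plane,
      Function.Injective f ∧ Set.range f = ↑S ∧
      ∀ i : ZMod S.card,
        EuclideanGeometry.angle (f (i - 1)) (f i) (f (i + 1)) ≤ π / 2 := by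
  classical
  have hne : ∀ x y : Plane, x ∈ ({p₁, p₂, p₃, p₄} : Set Plane) →
      y ∈ ({q₁, q₂, q₃, q₄} : Set Plane) → x ≠ y := by
    rintro x y hx hy rfl
    have : x ∈ (∅ : Set Plane) := hdisj ▸ ⟨hx, hy⟩
    exact this
  obtain ⟨l1, c1, m1⟩ := split_two S₁ p₁ q₁ hp₁ hq₁ (hne _ _ (by simp) (by simp))
  obtain ⟨l2, c2, m2⟩ := split_two S₂ p₂ q₂ hp₂ hq₂ (hne _ _ (by simp) (by simp))
  obtain ⟨l3, c3, m3⟩ := split_two S₃ p₃ q₃ hp₃ hq₃ (hne _ _ (by simp) (by simp))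
  obtain ⟨l4, c4, m4⟩ := split_two S₄ p₄ q₄ hp₄ hq₄ (hne _ _ (by simp) (by simp))
  have z42 := zig_perm l4 l2 (by omega)
  have z13 := zig_perm l1 l3 (by omega)
  have hSeq : S = S₁ ∪ S₂ ∪ S₃ ∪ S₄ := by
    apply Finset.coe_injective
    rw [hS]; push_cast; rfl
  have hcard : S.card = S₁.card + S₂.card + S₃.card + S₄.card := by
    rw [hSeq, Finset.card_union_of_disjoint, Finset.card_union_of_disjoint,
      Finset.card_union_of_disjoint hd12]
    · exact Finset.disjoint_union_left.2 ⟨hd13, hd23⟩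
    · exact Finset.disjoint_union_left.2 ⟨Finset.disjoint_union_left.2 ⟨hd14, hd24⟩, hd34⟩
  obtain ⟨l, hl⟩ : ∃ l, l = p₄ :: p₂ :: (zig l4 l2 ++ q₄ :: q₂ :: q₁ :: q₃ :: zig l1 l3) :=
    ⟨_, rfl⟩
  have hlen : S.card = (p₁ :: p₃ :: l).length := by
    have e1 := z42.length_eq
    have e2 := z13.length_eq
    rw [hl]
    simp only [List.length_append, List.length_cons] at e1 e2 ⊢
    omega
  have hmem : ∀ x, x ∈ p₁ :: p₃ :: l ↔ x ∈ S := by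
    intro x
    rw [hSeq, hl]
    simp only [List.mem_cons, List.mem_append, z42.mem_iff, z13.mem_iff, Finset.mem_union,
      m1, m2, m3, m4]
    tauto
  have hnd : (p₁ :: p₃ :: l).Nodup := by
    have : (p₁ :: p₃ :: l).toFinset = S := by
      ext x; rw [List.mem_toFinset]; exact hmem x
    have h3 : (p₁ :: p₃ :: l).toFinset.card = (p₁ :: p₃ :: l).length := by rw [this, hlen]
    exact Multiset.coe_nodup.1 (Multiset.toFinset_card_eq_card_iff_nodup.1 h3)
  have hac : AcuteL ((p₁ :: p₃ :: l) ++ [p₁, p₃]) := by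
    have hB := acuteL_zig InQ1 InQ3 ang131 ang313 p₁ p₃ (hQ1 _ hp₁) (hQ3 _ hp₃) [] trivial
      l1 l3 q₁ q₃ (hQ1 _ hq₁) (hQ3 _ hq₃) (fun x hx => hQ1 x ((m1 x).2 (by tauto)))
      (fun x hx => hQ3 x ((m3 x).2 (by tauto)))
    have hA := acuteL_zig InQ4 InQ2 ang424 ang242 q₄ q₂ (hQ4 _ hq₄) (hQ2 _ hq₂)
      (q₁ :: q₃ :: (zig l1 l3 ++ [p₁, p₃])) ⟨hQ.1, hQ.2, hB⟩
      l4 l2 p₄ p₂ (hQ4 _ hp₄) (hQ2 _ hp₂) (fun x hx => hQ4 x ((m4 x).2 (by tauto)))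
      (fun x hx => hQ2 x ((m2 x).2 (by tauto)))
    rw [hl]
    simp only [List.cons_append, List.append_assoc]
    exact ⟨hP.1, hP.2, hA⟩
  obtain ⟨f, hf1, hf2, hf3⟩ := cyc S.card p₁ p₃ l hlen hac hnd
  refine ⟨f, hf1, ?_, hf3⟩
  rw [hf2]
  ext x
  simpa using hmem x
end
end

section
/- Let S₁, S₂, S₃, S₄ be pairwise disjoint finite sets of points in ℝ² with S_i ⊆ Q_i for i = 1, 2, 3, 4, |S₁| = |S₃| ≥ 3 and |S₂| = |S₄| ≥ 3, and let S = S₁ ∪ S₂ ∪ S₃ ∪ S₄. Suppose there exist three pairwise disjoint quadruples P = {p₁, p₂, p₃, p₄}, Q = {q₁, q₂, q₃, q₄} and R = {r₁, r₂, r₃, r₄} with p_i, q_i, r_i ∈ S_i for i = 1, 2, 3, 4, such that each of P, Q, R is concave-obtuse and upward (i.e., the paths p₂p₄p₃p₁, q₂q₄q₃q₁ and r₂r₄r₃r₁ are acute). Then S admits an acute spanning tour. -/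
open EuclideanGeometry Real

noncomputable section

/-- Every three consecutive entries of the list satisfy `A`. -/
def Triples {α : Type*} (A : α → α → α → Prop) : List α → Prop
  | a :: b :: c :: l => A a b c ∧ Triples A (b :: c :: l)
  | _ => True

/-- Interleaving of two lists. -/
def interleave {α : Type*} : List α → List α → List α
  | a :: as, b :: bs => a :: b :: interleave as bs
  | _, _ => []

theorem interleave_mem {α : Type*} (as bs : List α) (h : as.length = bs.length) (x : α) :
    x ∈ interleave as bs ↔ x ∈ as ∨ x ∈ bs := by
  induction as generalizing bs with
  | nil => cases bs <;> simp_all [interleave]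
  | cons a as ih =>
    cases bs with
    | nil => simp at h
    | cons b bs =>
      simp only [interleave, List.mem_cons, ih bs (by simpa using h)]
      tauto

theorem interleave_length {α : Type*} (as bs : List α) (h : as.length = bs.length) :
    (interleave as bs).length = as.length + bs.length := by
  induction as generalizing bs with
  | nil => cases bs <;> simp_all [interleave]
  | cons a as ih =>
    cases bs with
    | nil => simp at h
    | cons b bs =>
      simp only [interleave, List.length_cons, ih bs (by simpa using h)]
      omega

theorem triples_interleave {α : Type*} (A : α → α → α → Prop) (U V : Finset α)
    (hU : ∀ a ∈ V, ∀ b ∈ U, ∀ c ∈ V, A a b c) (hV : ∀ a ∈ U, ∀ b ∈ V, ∀ c ∈ U, A a b c)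
    (y z : α) (rest : List α) (hy : y ∈ U) (hz : z ∈ V) (hT : Triples A (y :: z :: rest))
    (as bs : List α) (has : ∀ a ∈ as, a ∈ U) (hbs : ∀ b ∈ bs, b ∈ V)
    (w x : α) (hx : x ∈ V) (hw : ∀ a ∈ U, A w x a) :
    Triples A (w :: x :: (interleave as bs ++ y :: z :: rest)) := by
  induction as generalizing bs w x with
  | nil =>
    simp only [interleave, List.nil_append]
    exact ⟨hw y hy, hU x hx y hy z hz, hT⟩
  | cons a as ih =>
    cases bs with
    | nil =>
      simp only [interleave, List.nil_append]
      exact ⟨hw y hy, hU x hx y hy z hz, hT⟩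
    | cons b bs =>
      have ha : a ∈ U := has a (by simp)
      have hb : b ∈ V := hbs b (by simp)
      simp only [interleave, List.cons_append]
      exact ⟨hw a ha, hU x hx a ha b hb,
        ih bs (fun a' h => has a' (by simp [h])) (fun b' h => hbs b' (by simp [h])) a b hb
          (fun c hc => hV a ha b hb c hc)⟩

theorem triples_get {α : Type*} (A : α → α → α → Prop) (d : α) (l : List α) (h : Triples A l)
    (k : ℕ) (hk : k + 2 < l.length) : A (l.getD k d) (l.getD (k+1) d) (l.getD (k+2) d) := by
  induction l generalizing k with
  | nil => simp at hk
  | cons a l ih =>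
    match l, h, ih, hk with
    | [], _, _, hk => simp at hk
    | [_], _, _, hk => simp at hk
    | b :: c :: l, h, ih, hk =>
      cases k with
      | zero => simpa using h.1
      | succ k => simpa using ih h.2 k (by simpa using hk)

theorem tour_of_list {α : Type*} [DecidableEq α] (A : α → α → α → Prop) (S : Finset α)
    (a b : α) (l : List α)
    (hmem : ∀ x, x ∈ a :: b :: l ↔ x ∈ S) (hlen : (a :: b :: l).length = S.card)
    (hT : Triples A (a :: b :: (l ++ [a, b]))) :
    ∃ f : ZMod S.card → α, Function.Injective f ∧ Set.range f = ↑S ∧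
      ∀ i : ZMod S.card, A (f (i - 1)) (f i) (f (i + 1)) := by
  have hnd : (a :: b :: l).Nodup := by
    have h : (a :: b :: l).toFinset = S := by
      ext x; rw [List.mem_toFinset]; exact hmem x
    have h2 : Multiset.card (↑(a :: b :: l) : Multiset α)
        = (↑(a :: b :: l) : Multiset α).toFinset.card := by
      rw [Multiset.coe_card, hlen, ← h]; rfl
    exact Multiset.coe_nodup.1 (Multiset.toFinset_card_eq_card_iff_nodup.1 h2.symm)
  generalize hn : S.card = n at *
  have hn2 : 2 ≤ n := by rw [← hlen]; simp
  have : NeZero n := ⟨by omega⟩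
  have : Fact (1 < n) := ⟨by omega⟩
  have hwrap : ∀ k, k < n + 2 →
      (a :: b :: (l ++ [a, b])).getD k a = (a :: b :: l).getD (k % n) a := by
    intro k hk
    have e : a :: b :: (l ++ [a, b]) = (a :: b :: l) ++ [a, b] := by simp
    rw [e]
    rcases lt_or_ge k n with h | h
    · rw [Nat.mod_eq_of_lt h, List.getD_append _ _ _ _ (by omega)]
    · rw [List.getD_append_right _ _ _ _ (by omega), hlen, Nat.mod_eq_sub_mod h,
        Nat.mod_eq_of_lt (by omega)]
      have : k - n = 0 ∨ k - n = 1 := by omega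
      rcases this with h | h <;> simp [h]
  refine ⟨fun i => (a :: b :: l).getD i.val a, ?_, ?_, ?_⟩
  · intro i j hij
    have hi : i.val < (a :: b :: l).length := by rw [hlen]; exact ZMod.val_lt i
    have hj : j.val < (a :: b :: l).length := by rw [hlen]; exact ZMod.val_lt j
    simp only at hij
    rw [List.getD_eq_getElem _ _ hi, List.getD_eq_getElem _ _ hj] at hij
    exact ZMod.val_injective n ((hnd.getElem_inj_iff).1 hij)
  · ext x
    rw [Finset.mem_coe, ← hmem x, List.mem_iff_getElem]
    constructor
    · rintro ⟨i, rfl⟩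
      have hi : i.val < (a :: b :: l).length := by rw [hlen]; exact ZMod.val_lt i
      exact ⟨i.val, hi, (List.getD_eq_getElem _ _ hi).symm⟩
    · rintro ⟨k, hk, rfl⟩
      refine ⟨(k : ZMod n), ?_⟩
      simp only
      rw [ZMod.val_natCast, Nat.mod_eq_of_lt (by omega), List.getD_eq_getElem _ _ hk]
  · intro i
    obtain ⟨j, rfl⟩ : ∃ j : ZMod n, i = j + 1 := ⟨i - 1, by ring⟩
    have hj : j.val < n := ZMod.val_lt j
    have h := triples_get A a _ hT j.val (by simp at hlen ⊢; omega)
    rw [hwrap _ (by omega), hwrap _ (by omega), hwrap _ (by omega)] at h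
    have e0 : j + 1 - 1 = j := by ring
    have e1 : (j + 1).val = (j.val + 1) % n := by
      rw [ZMod.val_add, ZMod.val_one]
    have e2 : (j + 1 + 1).val = (j.val + 2) % n := by
      rw [ZMod.val_add, e1, ZMod.val_one, Nat.mod_add_mod]
    simp only [e0, e1, e2]
    rwa [Nat.mod_eq_of_lt hj] at h

theorem erase_three {α : Type*} [DecidableEq α] (T : Finset α) (p q r : α)
    (hp : p ∈ T) (hq : q ∈ T) (hr : r ∈ T) (hpq : p ≠ q) (hpr : p ≠ r) (hqr : q ≠ r) :
    ∃ L : List α, L.length + 3 = T.card ∧ ∀ x, x ∈ T ↔ x = p ∨ x = q ∨ x = r ∨ x ∈ L := by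
  refine ⟨(T \ {p, q, r}).toList, ?_, ?_⟩
  · have h3 : ({p, q, r} : Finset α).card = 3 := Finset.card_eq_three.2 ⟨p, q, r, hpq, hpr, hqr, rfl⟩
    have hs : ({p, q, r} : Finset α) ⊆ T := by
      intro x hx
      simp only [Finset.mem_insert, Finset.mem_singleton] at hx
      rcases hx with rfl | rfl | rfl <;> assumption
    have := Finset.card_sdiff_add_card_eq_card hs
    rw [Finset.length_toList]; omega
  · intro x
    simp only [Finset.mem_toList, Finset.mem_sdiff, Finset.mem_insert, Finset.mem_singleton]
    by_cases h1 : x = p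
    · subst h1; simp [hp]
    by_cases h2 : x = q
    · subst h2; simp [hq]
    by_cases h3 : x = r
    · subst h3; simp [hr]
    simp [h1, h2, h3]

/-- The combinatorial core: the tour
`p₄ p₂ r₁ r₂ (4 2)* r₄ q₂ q₄ q₃ q₁ (3 1)* r₃ p₁ p₃`. -/
theorem tour_core {α : Type*} [DecidableEq α] (A : α → α → α → Prop)
    (S₁ S₂ S₃ S₄ S : Finset α)
    (h131 : ∀ a ∈ S₁, ∀ b ∈ S₃, ∀ c ∈ S₁, A a b c)
    (h313 : ∀ a ∈ S₃, ∀ b ∈ S₁, ∀ c ∈ S₃, A a b c)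
    (h242 : ∀ a ∈ S₂, ∀ b ∈ S₄, ∀ c ∈ S₂, A a b c)
    (h424 : ∀ a ∈ S₄, ∀ b ∈ S₂, ∀ c ∈ S₄, A a b c)
    (hc13 : S₁.card = S₃.card) (hc24 : S₂.card = S₄.card)
    (hmem : ∀ x, x ∈ S ↔ x ∈ S₁ ∨ x ∈ S₂ ∨ x ∈ S₃ ∨ x ∈ S₄)
    (hcard : S.card = S₁.card + S₂.card + S₃.card + S₄.card)
    (p₁ p₂ p₃ p₄ q₁ q₂ q₃ q₄ r₁ r₂ r₃ r₄ : α)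
    (hp₁ : p₁ ∈ S₁) (hp₂ : p₂ ∈ S₂) (hp₃ : p₃ ∈ S₃) (hp₄ : p₄ ∈ S₄)
    (hq₁ : q₁ ∈ S₁) (hq₂ : q₂ ∈ S₂) (hq₃ : q₃ ∈ S₃) (hq₄ : q₄ ∈ S₄)
    (hr₁ : r₁ ∈ S₁) (hr₂ : r₂ ∈ S₂) (hr₃ : r₃ ∈ S₃) (hr₄ : r₄ ∈ S₄)
    (hpq₁ : p₁ ≠ q₁) (hpr₁ : p₁ ≠ r₁) (hqr₁ : q₁ ≠ r₁)
    (hpq₂ : p₂ ≠ q₂) (hpr₂ : p₂ ≠ r₂) (hqr₂ : q₂ ≠ r₂)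
    (hpq₃ : p₃ ≠ q₃) (hpr₃ : p₃ ≠ r₃) (hqr₃ : q₃ ≠ r₃)
    (hpq₄ : p₄ ≠ q₄) (hpr₄ : p₄ ≠ r₄) (hqr₄ : q₄ ≠ r₄)
    (hP1 : A p₃ p₄ p₂) (hP2 : A p₁ p₃ p₄) (hQ1 : A q₂ q₄ q₃) (hQ2 : A q₄ q₃ q₁)
    (hx1 : A p₄ p₂ r₁) (hx2 : A p₂ r₁ r₂) (hx3 : ∀ s ∈ S₄, A r₁ r₂ s) :
    ∃ f : ZMod S.card → α, Function.Injective f ∧ Set.range f = ↑S ∧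
      ∀ i : ZMod S.card, A (f (i - 1)) (f i) (f (i + 1)) := by
  obtain ⟨L₁, hl₁, hm₁⟩ := erase_three S₁ p₁ q₁ r₁ hp₁ hq₁ hr₁ hpq₁ hpr₁ hqr₁
  obtain ⟨L₂, hl₂, hm₂⟩ := erase_three S₂ p₂ q₂ r₂ hp₂ hq₂ hr₂ hpq₂ hpr₂ hqr₂
  obtain ⟨L₃, hl₃, hm₃⟩ := erase_three S₃ p₃ q₃ r₃ hp₃ hq₃ hr₃ hpq₃ hpr₃ hqr₃
  obtain ⟨L₄, hl₄, hm₄⟩ := erase_three S₄ p₄ q₄ r₄ hp₄ hq₄ hr₄ hpq₄ hpr₄ hqr₄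
  have e31 : L₃.length = L₁.length := by omega
  have e42 : L₄.length = L₂.length := by omega
  have s1 : ∀ x ∈ L₁, x ∈ S₁ := fun x h => (hm₁ x).2 (by simp [h])
  have s2 : ∀ x ∈ L₂, x ∈ S₂ := fun x h => (hm₂ x).2 (by simp [h])
  have s3 : ∀ x ∈ L₃, x ∈ S₃ := fun x h => (hm₃ x).2 (by simp [h])
  have s4 : ∀ x ∈ L₄, x ∈ S₄ := fun x h => (hm₄ x).2 (by simp [h])
  refine tour_of_list A S p₄ p₂ (r₁ :: r₂ :: (interleave L₄ L₂ ++
    r₄ :: q₂ :: q₄ :: q₃ :: q₁ :: (interleave L₃ L₁ ++ [r₃, p₁, p₃]))) ?_ ?_ ?_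
  · intro x
    simp only [List.mem_cons, List.mem_append, interleave_mem _ _ e31, interleave_mem _ _ e42,
      hmem, hm₁, hm₂, hm₃, hm₄, List.not_mem_nil, or_false]
    apply iff_of_eq
    ac_rfl
  · simp only [List.length_cons, List.length_append, interleave_length _ _ e31,
      interleave_length _ _ e42, List.length_nil]
    omega
  · simp only [List.cons_append, List.append_assoc, List.nil_append]
    refine ⟨hx1, hx2, ?_⟩
    refine triples_interleave A S₄ S₂ h242 h424 r₄ q₂ _ hr₄ hq₂ ?_ L₄ L₂ s4 s2 r₁ r₂ hr₂ hx3
    refine ⟨h424 _ hr₄ _ hq₂ _ hq₄, hQ1, hQ2, ?_⟩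
    refine triples_interleave A S₃ S₁ h131 h313 r₃ p₁ _ hr₃ hp₁ ?_ L₃ L₁ s3 s1 q₃ q₁ hq₁
      (fun a ha => h313 _ hq₃ _ hq₁ _ ha)
    exact ⟨h313 _ hr₃ _ hp₁ _ hp₃, hP2, hP1, trivial⟩

theorem acute_iff (a b c : Plane) : EuclideanGeometry.angle a b c ≤ π / 2 ↔
    0 ≤ (a 0 - b 0) * (c 0 - b 0) + (a 1 - b 1) * (c 1 - b 1) := by
  unfold EuclideanGeometry.angle
  rw [InnerProductGeometry.angle, Real.arccos_le_pi_div_two]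
  have key : 0 ≤ inner ℝ (a -ᵥ b) (c -ᵥ b) / (‖a -ᵥ b‖ * ‖c -ᵥ b‖) ↔
      0 ≤ inner ℝ (a -ᵥ b) (c -ᵥ b) := by
    constructor
    · intro h
      by_cases hab : a -ᵥ b = 0
      · rw [hab, inner_zero_left]
      by_cases hcb : c -ᵥ b = 0
      · rw [hcb, inner_zero_right]
      have hpos : 0 < ‖a -ᵥ b‖ * ‖c -ᵥ b‖ :=
        mul_pos (norm_pos_iff.2 hab) (norm_pos_iff.2 hcb)
      have := mul_nonneg h hpos.le
      rwa [div_mul_cancel₀ _ hpos.ne'] at this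
    · intro h; positivity
  rw [key]
  simp [PiLp.inner_apply, Fin.sum_univ_two, mul_comm]

theorem acute_of_signs {a b c : Plane}
    (h : ((a 0 ≤ b 0 ∧ c 0 ≤ b 0) ∨ (b 0 ≤ a 0 ∧ b 0 ≤ c 0)) ∧
      ((a 1 ≤ b 1 ∧ c 1 ≤ b 1) ∨ (b 1 ≤ a 1 ∧ b 1 ≤ c 1))) :
    EuclideanGeometry.angle a b c ≤ π / 2 := by
  rw [acute_iff]
  apply add_nonneg
  · rcases h.1 with h | h <;> nlinarith [h.1, h.2]
  · rcases h.2 with h | h <;> nlinarith [h.1, h.2]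

/-- Given three upward quadruples where `r₁` is weakly below `p₂`, `r₂`,
or `r₂` is weakly below `p₁`, `r₁`. -/
theorem tour_geom
    (S₁ S₂ S₃ S₄ S : Finset Plane)
    (hQ1 : ∀ p ∈ S₁, InQ1 p) (hQ2 : ∀ p ∈ S₂, InQ2 p)
    (hQ3 : ∀ p ∈ S₃, InQ3 p) (hQ4 : ∀ p ∈ S₄, InQ4 p)
    (hc13 : S₁.card = S₃.card) (hc24 : S₂.card = S₄.card)
    (hmem : ∀ x, x ∈ S ↔ x ∈ S₁ ∨ x ∈ S₂ ∨ x ∈ S₃ ∨ x ∈ S₄)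
    (hcard : S.card = S₁.card + S₂.card + S₃.card + S₄.card)
    (p₁ p₂ p₃ p₄ q₁ q₂ q₃ q₄ r₁ r₂ r₃ r₄ : Plane)
    (hp₁ : p₁ ∈ S₁) (hp₂ : p₂ ∈ S₂) (hp₃ : p₃ ∈ S₃) (hp₄ : p₄ ∈ S₄)
    (hq₁ : q₁ ∈ S₁) (hq₂ : q₂ ∈ S₂) (hq₃ : q₃ ∈ S₃) (hq₄ : q₄ ∈ S₄)
    (hr₁ : r₁ ∈ S₁) (hr₂ : r₂ ∈ S₂) (hr₃ : r₃ ∈ S₃) (hr₄ : r₄ ∈ S₄)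
    (hpq : p₁ ≠ q₁ ∧ p₂ ≠ q₂ ∧ p₃ ≠ q₃ ∧ p₄ ≠ q₄)
    (hpr : p₁ ≠ r₁ ∧ p₂ ≠ r₂ ∧ p₃ ≠ r₃ ∧ p₄ ≠ r₄)
    (hqr : q₁ ≠ r₁ ∧ q₂ ≠ r₂ ∧ q₃ ≠ r₃ ∧ q₄ ≠ r₄)
    (hP : Upward p₁ p₂ p₃ p₄) (hQ : Upward q₁ q₂ q₃ q₄)
    (hlow : (r₁ 1 ≤ p₂ 1 ∧ r₁ 1 ≤ r₂ 1) ∨ (r₂ 1 ≤ p₁ 1 ∧ r₂ 1 ≤ r₁ 1)) :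
    ∃ f : ZMod S.card → Plane,
      Function.Injective f ∧ Set.range f = ↑S ∧
      ∀ i : ZMod S.card,
        EuclideanGeometry.angle (f (i - 1)) (f i) (f (i + 1)) ≤ π / 2 := by
  classical
  have h131 : ∀ a ∈ S₁, ∀ b ∈ S₃, ∀ c ∈ S₁, EuclideanGeometry.angle a b c ≤ π / 2 := by
    intro a ha b hb c hc
    obtain ⟨_, _⟩ := hQ1 a ha; obtain ⟨_, _⟩ := hQ3 b hb; obtain ⟨_, _⟩ := hQ1 c hc
    exact acute_of_signs ⟨Or.inr ⟨by linarith, by linarith⟩, Or.inr ⟨by linarith, by linarith⟩⟩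
  have h313 : ∀ a ∈ S₃, ∀ b ∈ S₁, ∀ c ∈ S₃, EuclideanGeometry.angle a b c ≤ π / 2 := by
    intro a ha b hb c hc
    obtain ⟨_, _⟩ := hQ3 a ha; obtain ⟨_, _⟩ := hQ1 b hb; obtain ⟨_, _⟩ := hQ3 c hc
    exact acute_of_signs ⟨Or.inl ⟨by linarith, by linarith⟩, Or.inl ⟨by linarith, by linarith⟩⟩
  have h242 : ∀ a ∈ S₂, ∀ b ∈ S₄, ∀ c ∈ S₂, EuclideanGeometry.angle a b c ≤ π / 2 := by
    intro a ha b hb c hc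
    obtain ⟨_, _⟩ := hQ2 a ha; obtain ⟨_, _⟩ := hQ4 b hb; obtain ⟨_, _⟩ := hQ2 c hc
    exact acute_of_signs ⟨Or.inl ⟨by linarith, by linarith⟩, Or.inr ⟨by linarith, by linarith⟩⟩
  have h424 : ∀ a ∈ S₄, ∀ b ∈ S₂, ∀ c ∈ S₄, EuclideanGeometry.angle a b c ≤ π / 2 := by
    intro a ha b hb c hc
    obtain ⟨_, _⟩ := hQ4 a ha; obtain ⟨_, _⟩ := hQ2 b hb; obtain ⟨_, _⟩ := hQ4 c hc
    exact acute_of_signs ⟨Or.inr ⟨by linarith, by linarith⟩, Or.inl ⟨by linarith, by linarith⟩⟩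
  obtain ⟨hP1, hP2⟩ := hP
  obtain ⟨hU1, hU2⟩ := hQ
  have hP1' := hP1
  have hP2' := hP2
  have hU1' := hU1
  have hU2' := hU2
  rw [EuclideanGeometry.angle_comm] at hP1' hP2' hU1' hU2'
  obtain ⟨_, _⟩ := hQ1 _ hp₁; obtain ⟨_, _⟩ := hQ2 _ hp₂
  obtain ⟨_, _⟩ := hQ3 _ hp₃; obtain ⟨_, _⟩ := hQ4 _ hp₄
  obtain ⟨_, _⟩ := hQ1 _ hr₁; obtain ⟨_, _⟩ := hQ2 _ hr₂
  rcases hlow with ⟨l1, l2⟩ | ⟨l1, l2⟩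
  · refine tour_core (fun a b c => EuclideanGeometry.angle a b c ≤ π / 2) S₁ S₂ S₃ S₄ S
      h131 h313 h242 h424 hc13 hc24 hmem hcard p₁ p₂ p₃ p₄ q₁ q₂ q₃ q₄ r₁ r₂ r₃ r₄
      hp₁ hp₂ hp₃ hp₄ hq₁ hq₂ hq₃ hq₄ hr₁ hr₂ hr₃ hr₄
      hpq.1 hpr.1 hqr.1 hpq.2.1 hpr.2.1 hqr.2.1 hpq.2.2.1 hpr.2.2.1 hqr.2.2.1
      hpq.2.2.2 hpr.2.2.2 hqr.2.2.2 hP1' hP2' hU1 hU2 ?_ ?_ ?_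
    · exact acute_of_signs ⟨Or.inr ⟨by linarith, by linarith⟩, Or.inl ⟨by linarith, by linarith⟩⟩
    · exact acute_of_signs ⟨Or.inl ⟨by linarith, by linarith⟩, Or.inr ⟨by linarith, by linarith⟩⟩
    · intro s hs
      obtain ⟨_, _⟩ := hQ4 _ hs
      exact acute_of_signs ⟨Or.inr ⟨by linarith, by linarith⟩, Or.inl ⟨by linarith, by linarith⟩⟩
  · refine tour_core (fun a b c => EuclideanGeometry.angle a b c ≤ π / 2) S₂ S₁ S₄ S₃ S
      h242 h424 h131 h313 hc24 hc13 (by intro x; rw [hmem x]; tauto) (by omega)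
      p₂ p₁ p₄ p₃ q₂ q₁ q₄ q₃ r₂ r₁ r₄ r₃
      hp₂ hp₁ hp₄ hp₃ hq₂ hq₁ hq₄ hq₃ hr₂ hr₁ hr₄ hr₃
      hpq.2.1 hpr.2.1 hqr.2.1 hpq.1 hpr.1 hqr.1
      hpq.2.2.2 hpr.2.2.2 hqr.2.2.2 hpq.2.2.1 hpr.2.2.1 hqr.2.2.1
      hP2 hP1 hU2' hU1' ?_ ?_ ?_
    · exact acute_of_signs ⟨Or.inl ⟨by linarith, by linarith⟩, Or.inl ⟨by linarith, by linarith⟩⟩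
    · exact acute_of_signs ⟨Or.inr ⟨by linarith, by linarith⟩, Or.inr ⟨by linarith, by linarith⟩⟩
    · intro s hs
      obtain ⟨_, _⟩ := hQ3 _ hs
      exact acute_of_signs ⟨Or.inl ⟨by linarith, by linarith⟩, Or.inl ⟨by linarith, by linarith⟩⟩

theorem ne_of_inter_empty {a b c d a' b' c' d' : Plane}
    (h : ({a, b, c, d} : Set Plane) ∩ ({a', b', c', d'} : Set Plane) = ∅) :
    a ≠ a' ∧ b ≠ b' ∧ c ≠ c' ∧ d ≠ d' := by
  have h' := Set.eq_empty_iff_forall_notMem.1 h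
  refine ⟨?_, ?_, ?_, ?_⟩
  · rintro rfl; exact h' a ⟨by simp, by simp⟩
  · rintro rfl; exact h' b ⟨by simp, by simp⟩
  · rintro rfl; exact h' c ⟨by simp, by simp⟩
  · rintro rfl; exact h' d ⟨by simp, by simp⟩

/-- **Case 2 of the construction.** If `S = S₁ ∪ S₂ ∪ S₃ ∪ S₄` with `Sᵢ` in the `i`-th closed
quadrant, `|S₁| = |S₃| ≥ 3`, `|S₂| = |S₄| ≥ 3`, and there are three pairwise disjoint
quadruples `P`, `Q`, `R` picking one point from each `Sᵢ`, each concave-obtuse and upward,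
then `S` admits an acute spanning tour. -/
theorem acute_tour_of_three_concaveObtuse_upward
    (S₁ S₂ S₃ S₄ S : Finset Plane)
    (hQ1 : ∀ p ∈ S₁, InQ1 p) (hQ2 : ∀ p ∈ S₂, InQ2 p)
    (hQ3 : ∀ p ∈ S₃, InQ3 p) (hQ4 : ∀ p ∈ S₄, InQ4 p)
    (hd12 : Disjoint S₁ S₂) (hd13 : Disjoint S₁ S₃) (hd14 : Disjoint S₁ S₄)
    (hd23 : Disjoint S₂ S₃) (hd24 : Disjoint S₂ S₄) (hd34 : Disjoint S₃ S₄)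
    (hc13 : S₁.card = S₃.card) (hc24 : S₂.card = S₄.card)
    (h1 : 3 ≤ S₁.card) (h2 : 3 ≤ S₂.card)
    (hS : (↑S : Set Plane) = ↑S₁ ∪ ↑S₂ ∪ ↑S₃ ∪ ↑S₄)
    (p₁ p₂ p₃ p₄ q₁ q₂ q₃ q₄ r₁ r₂ r₃ r₄ : Plane)
    (hp₁ : p₁ ∈ S₁) (hp₂ : p₂ ∈ S₂) (hp₃ : p₃ ∈ S₃) (hp₄ : p₄ ∈ S₄)
    (hq₁ : q₁ ∈ S₁) (hq₂ : q₂ ∈ S₂) (hq₃ : q₃ ∈ S₃) (hq₄ : q₄ ∈ S₄)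
    (hr₁ : r₁ ∈ S₁) (hr₂ : r₂ ∈ S₂) (hr₃ : r₃ ∈ S₃) (hr₄ : r₄ ∈ S₄)
    (hPQ : ({p₁, p₂, p₃, p₄} : Set Plane) ∩ ({q₁, q₂, q₃, q₄} : Set Plane) = ∅)
    (hPR : ({p₁, p₂, p₃, p₄} : Set Plane) ∩ ({r₁, r₂, r₃, r₄} : Set Plane) = ∅)
    (hQR : ({q₁, q₂, q₃, q₄} : Set Plane) ∩ ({r₁, r₂, r₃, r₄} : Set Plane) = ∅)
    (hPco : ConcaveObtuse p₁ p₂ p₃ p₄) (hQco : ConcaveObtuse q₁ q₂ q₃ q₄)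
    (hRco : ConcaveObtuse r₁ r₂ r₃ r₄)
    (hPup : Upward p₁ p₂ p₃ p₄) (hQup : Upward q₁ q₂ q₃ q₄) (hRup : Upward r₁ r₂ r₃ r₄) :
    ∃ f : ZMod S.card → Plane,
      Function.Injective f ∧ Set.range f = ↑S ∧
      ∀ i : ZMod S.card,
        EuclideanGeometry.angle (f (i - 1)) (f i) (f (i + 1)) ≤ π / 2 := by
  classical
  have nPQ := ne_of_inter_empty hPQ
  have nPR := ne_of_inter_empty hPR
  have nQR := ne_of_inter_empty hQR
  have nQP : q₁ ≠ p₁ ∧ q₂ ≠ p₂ ∧ q₃ ≠ p₃ ∧ q₄ ≠ p₄ :=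
    ⟨nPQ.1.symm, nPQ.2.1.symm, nPQ.2.2.1.symm, nPQ.2.2.2.symm⟩
  have nRP : r₁ ≠ p₁ ∧ r₂ ≠ p₂ ∧ r₃ ≠ p₃ ∧ r₄ ≠ p₄ :=
    ⟨nPR.1.symm, nPR.2.1.symm, nPR.2.2.1.symm, nPR.2.2.2.symm⟩
  have nRQ : r₁ ≠ q₁ ∧ r₂ ≠ q₂ ∧ r₃ ≠ q₃ ∧ r₄ ≠ q₄ :=
    ⟨nQR.1.symm, nQR.2.1.symm, nQR.2.2.1.symm, nQR.2.2.2.symm⟩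
  have hSu : S = S₁ ∪ S₂ ∪ S₃ ∪ S₄ := by
    apply Finset.coe_injective; rw [hS]; push_cast; rfl
  have hmem : ∀ x, x ∈ S ↔ x ∈ S₁ ∨ x ∈ S₂ ∨ x ∈ S₃ ∨ x ∈ S₄ := by
    intro x; rw [hSu]; simp only [Finset.mem_union]; tauto
  have hcard : S.card = S₁.card + S₂.card + S₃.card + S₄.card := by
    rw [hSu, Finset.card_union_of_disjoint, Finset.card_union_of_disjoint,
      Finset.card_union_of_disjoint hd12]
    · exact Finset.disjoint_union_left.2 ⟨hd13, hd23⟩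
    · exact Finset.disjoint_union_left.2 ⟨Finset.disjoint_union_left.2 ⟨hd14, hd24⟩, hd34⟩
  -- the quadruple containing the lowest point among `p₁, p₂, q₁, q₂, r₁, r₂` plays the role of `R`
  have hmin : ((r₁ 1 ≤ p₂ 1 ∧ r₁ 1 ≤ r₂ 1) ∨ (r₂ 1 ≤ p₁ 1 ∧ r₂ 1 ≤ r₁ 1)) ∨
      ((q₁ 1 ≤ p₂ 1 ∧ q₁ 1 ≤ q₂ 1) ∨ (q₂ 1 ≤ p₁ 1 ∧ q₂ 1 ≤ q₁ 1)) ∨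
      ((p₁ 1 ≤ q₂ 1 ∧ p₁ 1 ≤ p₂ 1) ∨ (p₂ 1 ≤ q₁ 1 ∧ p₂ 1 ≤ p₁ 1)) := by
    by_contra! h
    obtain ⟨⟨a1, a2⟩, ⟨b1, b2⟩, ⟨c1, c2⟩⟩ := h
    rcases le_total (p₁ 1) (p₂ 1) with h | h <;> rcases le_total (q₁ 1) (q₂ 1) with h' | h' <;>
    grind
  rcases hmin with h | h | h
  · exact tour_geom S₁ S₂ S₃ S₄ S hQ1 hQ2 hQ3 hQ4 hc13 hc24 hmem hcard
      p₁ p₂ p₃ p₄ q₁ q₂ q₃ q₄ r₁ r₂ r₃ r₄ hp₁ hp₂ hp₃ hp₄ hq₁ hq₂ hq₃ hq₄ hr₁ hr₂ hr₃ hr₄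
      nPQ nPR nQR hPup hQup h
  · exact tour_geom S₁ S₂ S₃ S₄ S hQ1 hQ2 hQ3 hQ4 hc13 hc24 hmem hcard
      p₁ p₂ p₃ p₄ r₁ r₂ r₃ r₄ q₁ q₂ q₃ q₄ hp₁ hp₂ hp₃ hp₄ hr₁ hr₂ hr₃ hr₄ hq₁ hq₂ hq₃ hq₄
      nPR nPQ nRQ hPup hRup h
  · exact tour_geom S₁ S₂ S₃ S₄ S hQ1 hQ2 hQ3 hQ4 hc13 hc24 hmem hcard
      q₁ q₂ q₃ q₄ r₁ r₂ r₃ r₄ p₁ p₂ p₃ p₄ hq₁ hq₂ hq₃ hq₄ hr₁ hr₂ hr₃ hr₄ hp₁ hp₂ hp₃ hp₄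
      nQR nQP nRP hQup hRup h
end
end

section
/- Let n ≥ 3 be odd and let S be a set of n distinct collinear points in ℝ². Then every spanning tour of S has a rotation angle equal to π at some vertex. -/
open EuclideanGeometry Real

lemma angle_pi_aux (p v x y z : EuclideanSpace ℝ (Fin 2)) (a b c : ℝ)
    (hx : x = a • v +ᵥ p) (hy : y = b • v +ᵥ p) (hz : z = c • v +ᵥ p)
    (hxy : x ≠ y) (hyz : y ≠ z) (hab : a < b) (hbc : b < c) :
    EuclideanGeometry.angle x y z = π := by
  apply Sbtw.angle₁₂₃_eq_pi
  refine ⟨⟨(b - a) / (c - a), ⟨?_, ?_⟩, ?_⟩, hxy.symm, hyz⟩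
  · exact div_nonneg (by linarith) (by linarith)
  · rw [div_le_one (by linarith)]; linarith
  · have h : c - a ≠ 0 := by linarith
    subst hx hy hz
    rw [AffineMap.lineMap_apply]
    ext i
    simp
    field_simp
    ring

/-- For an odd number `n ≥ 3` of collinear points, every spanning tour has a rotation
angle equal to `π` at some vertex. -/
theorem collinear_odd_tour_has_straight_angle
    (n : ℕ) (hn : 3 ≤ n) (hodd : Odd n)
    (S : Finset (EuclideanSpace ℝ (Fin 2))) (hcard : S.card = n)
    (hcol : Collinear ℝ (↑S : Set (EuclideanSpace ℝ (Fin 2))))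
    (f : ZMod n → EuclideanSpace ℝ (Fin 2))
    (hinj : Function.Injective f) (hrange : Set.range f = ↑S) :
    ∃ i : ZMod n, EuclideanGeometry.angle (f (i - 1)) (f i) (f (i + 1)) = π := by
  by_contra hcon
  push Not at hcon
  have : Fact (1 < n) := ⟨by omega⟩
  obtain ⟨p, v, h⟩ := (collinear_iff_exists_forall_eq_smul_vadd _).1 hcol
  have h' : ∀ i, ∃ r : ℝ, f i = r • v +ᵥ p := fun i => h _ (hrange ▸ Set.mem_range_self i)
  choose r hr using h'
  have hne : ∀ i, f i ≠ f (i + 1) := fun i hi => by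
    have := hinj hi
    simp at this
  have hrne : ∀ i, r i ≠ r (i + 1) := fun i hi => hne i (by rw [hr i, hr (i + 1), hi])
  have key : ∀ i, r (i + 1) < r (i + 1 + 1) ↔ ¬ r i < r (i + 1) := by
    intro i
    have hc := hcon (i + 1)
    rw [add_sub_cancel_right] at hc
    constructor
    · intro h1 h2
      exact hc (angle_pi_aux p v _ _ _ _ _ _ (hr _) (hr _) (hr _) (hne _) (hne _) h2 h1)
    · intro h2
      by_contra h1
      have h1' := lt_of_le_of_ne (not_lt.1 h1) (hrne _).symm
      have h2' := lt_of_le_of_ne (not_lt.1 h2) (hrne _).symm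
      apply hc
      rw [EuclideanGeometry.angle_comm]
      exact angle_pi_aux p v _ _ _ _ _ _ (hr _) (hr _) (hr _) (hne _).symm (hne _).symm h1' h2'
  have par : ∀ k : ℕ, (r (k : ZMod n) < r ((k : ZMod n) + 1)) ↔
      (Even k ↔ r (0 : ZMod n) < r ((0 : ZMod n) + 1)) := by
    intro k
    induction k with
    | zero => simp
    | succ k ih =>
      rw [Nat.cast_succ, key, ih, Nat.even_add_one]
      tauto
  have hp := par n
  rw [ZMod.natCast_self] at hp
  have : ¬ Even n := Nat.not_even_iff_odd.2 hodd
  tauto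
end

section
/- Let a, b, c be the vertices of an equilateral triangle in ℝ² and let o be its center (centroid). Then every spanning tour of the four-point set {a, b, c, o} has a rotation angle of at least 2π/3 at some vertex. -/
open EuclideanGeometry Real

lemma center_angle_aux (x y z o : EuclideanSpace ℝ (Fin 2))
    (h1 : dist x y = dist y z) (h2 : dist y z = dist z x) (hpos : 0 < dist x y)
    (ho : o = (3 : ℝ)⁻¹ • (x + y + z)) :
    2 * π / 3 ≤ EuclideanGeometry.angle x o y := by
  unfold EuclideanGeometry.angle
  simp only [vsub_eq_sub]
  obtain ⟨p, hp⟩ : ∃ p, p = x - o := ⟨_, rfl⟩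
  obtain ⟨q, hq⟩ : ∃ q, q = y - o := ⟨_, rfl⟩
  rw [← hp, ← hq]
  have hz : z = (3 : ℝ) • o - x - y := by rw [ho, smul_smul]; norm_num; abel
  have e1 : x - y = p - q := by rw [hp, hq]; abel
  have e2 : y - z = p + (2 : ℝ) • q := by rw [hp, hq, hz]; module
  have e3 : z - x = -((2 : ℝ) • p + q) := by rw [hp, hq, hz]; module
  rw [dist_eq_norm, dist_eq_norm, e1, e2] at h1
  rw [dist_eq_norm, dist_eq_norm, e2, e3, norm_neg] at h2
  rw [dist_eq_norm, e1] at hpos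
  have n1 := norm_sub_sq_real p q
  have n2 := norm_add_sq_real p ((2 : ℝ) • q)
  have n3 := norm_add_sq_real ((2 : ℝ) • p) q
  rw [norm_smul, real_inner_smul_right] at n2
  rw [norm_smul, real_inner_smul_left] at n3
  norm_num at n2 n3
  rw [← h1] at n2 h2
  rw [← h2] at n3
  have hP : ‖p‖ ^ 2 = -2 * inner ℝ p q := by nlinarith
  have hQ : ‖q‖ ^ 2 = -2 * inner ℝ p q := by nlinarith
  have hPQ : ‖p‖ = ‖q‖ := by
    rw [← sq_eq_sq₀ (norm_nonneg _) (norm_nonneg _)]; linarith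
  have hI : inner ℝ p q < 0 := by nlinarith [pow_pos hpos 2]
  have : InnerProductGeometry.angle p q = 2 * π / 3 := by
    unfold InnerProductGeometry.angle
    have : inner ℝ p q / (‖p‖ * ‖q‖) = Real.cos (2 * π / 3) := by
      have hc : Real.cos (2 * π / 3) = -(1 / 2) := by
        rw [show 2 * π / 3 = π - π / 3 by ring, Real.cos_pi_sub, Real.cos_pi_div_three]
      rw [hc, ← hPQ, ← sq, hP]
      have hne := hI.ne
      field_simp
    rw [this, Real.arccos_cos] <;> linarith [Real.pi_pos]
  exact this.ge

/-- For the three vertices of an equilateral triangle together with its centroid, every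
spanning tour of these four points has a rotation angle of at least `2π/3` at some vertex. -/
theorem equilateral_with_center_tour_angle
    (a b c o : EuclideanSpace ℝ (Fin 2))
    (hdist : dist a b = dist b c ∧ dist b c = dist c a) (hpos : 0 < dist a b)
    (ho : o = (3 : ℝ)⁻¹ • (a + b + c))
    (f : ZMod 4 → EuclideanSpace ℝ (Fin 2))
    (hinj : Function.Injective f)
    (hrange : Set.range f = ({a, b, c, o} : Set (EuclideanSpace ℝ (Fin 2)))) :
    ∃ i : ZMod 4,
      2 * π / 3 ≤ EuclideanGeometry.angle (f (i - 1)) (f i) (f (i + 1)) := by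
  obtain ⟨h1, h2⟩ := hdist
  obtain ⟨i, hi⟩ : o ∈ Set.range f := by rw [hrange]; simp
  refine ⟨i, ?_⟩
  have hx : f (i - 1) ∈ ({a, b, c, o} : Set (EuclideanSpace ℝ (Fin 2))) := by
    rw [← hrange]; exact ⟨_, rfl⟩
  have hy : f (i + 1) ∈ ({a, b, c, o} : Set (EuclideanSpace ℝ (Fin 2))) := by
    rw [← hrange]; exact ⟨_, rfl⟩
  have hxo : f (i - 1) ≠ o := by
    rw [← hi]; intro h; have := hinj h; clear * - this; revert this; revert i; decide
  have hyo : f (i + 1) ≠ o := by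
    rw [← hi]; intro h; have := hinj h; clear * - this; revert this; revert i; decide
  have hxy : f (i - 1) ≠ f (i + 1) := by
    intro h; have := hinj h; clear * - this; revert this; revert i; decide
  rw [hi]
  generalize f (i - 1) = x at *
  generalize f (i + 1) = y at *
  simp only [Set.mem_insert_iff, Set.mem_singleton_iff, hxo, hyo, or_false] at hx hy
  have hab := h1
  have hca := h2
  have s1 := dist_comm a b
  have s2 := dist_comm b c
  have s3 := dist_comm c a
  rcases hx with rfl | rfl | rfl <;> rcases hy with rfl | rfl | rfl <;>
    first
    | exact absurd rfl hxy
    | exact center_angle_aux _ _ c o (by linarith) (by linarith) (by linarith) (ho.trans (by module))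
    | exact center_angle_aux _ _ b o (by linarith) (by linarith) (by linarith) (ho.trans (by module))
    | exact center_angle_aux _ _ a o (by linarith) (by linarith) (by linarith) (ho.trans (by module))
end

section
/- Every finite set of n ≥ 2 distinct points in ℝ² admits an acute spanning path, i.e., an ordering p₁, p₂, …, p_n of the points (each appearing exactly once) such that ∠p_{i−1} p_i p_{i+1} ≤ π/2 for every 2 ≤ i ≤ n−1. Such a path can be obtained by starting from an arbitrary point and iteratively connecting the current point to a point farthest from it among the remaining points. -/
open EuclideanGeometry Real

noncomputable section

/-- From every starting point there is a greedy ordering. -/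
theorem greedy_exists (m : ℕ) : ∀ (S : Finset Plane), S.card = m + 1 → ∀ p ∈ S,
    ∃ f : ℕ → Plane, Set.InjOn f (Set.Iio (m + 1)) ∧ f '' Set.Iio (m + 1) = ↑S ∧ f 0 = p ∧
      ∀ i j : ℕ, i < j → j < m + 1 → dist (f i) (f j) ≤ dist (f i) (f (i + 1)) := by
  classical
  induction m with
  | zero =>
    intro S hS p hp
    obtain ⟨a, rfl⟩ := Finset.card_eq_one.mp hS
    have hpa : p = a := by simpa using hp
    subst hpa
    refine ⟨fun _ => p, ?_, ?_, rfl, ?_⟩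
    · intro i hi j hj _
      simp only [Set.mem_Iio] at hi hj
      omega
    · ext x
      constructor
      · rintro ⟨i, _, rfl⟩
        simp
      · intro hx
        exact ⟨0, by simp, by simpa [eq_comm] using hx⟩
    · intro i j h1 h2
      omega
  | succ m ih =>
    intro S hS p hp
    have hT : (S.erase p).card = m + 1 := by
      rw [Finset.card_erase_of_mem hp, hS]; rfl
    have hne : (S.erase p).Nonempty := Finset.card_pos.mp (by omega)
    obtain ⟨q, hq, hmax⟩ := Finset.exists_max_image (S.erase p) (fun x => dist p x) hne
    obtain ⟨g, ginj, gim, g0, gr⟩ := ih (S.erase p) hT q hq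
    have gmem : ∀ i, i < m + 1 → g i ∈ S.erase p := by
      intro i hi
      have : g i ∈ g '' Set.Iio (m + 1) := ⟨i, hi, rfl⟩
      rw [gim] at this
      exact_mod_cast this
    refine ⟨fun i => Nat.casesOn i p g, ?_, ?_, rfl, ?_⟩
    · intro i hi j hj hij
      simp only [Set.mem_Iio] at hi hj
      rcases i with _ | i <;> rcases j with _ | j
      · rfl
      · have hij' : p = g j := hij
        have := gmem j (by omega)
        rw [← hij'] at this
        simp at this
      · have hij' : g i = p := hij
        have := gmem i (by omega)
        rw [hij'] at this
        simp at this
      · have hij' : g i = g j := hij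
        have hi' : i < m + 1 := by omega
        have hj' : j < m + 1 := by omega
        rw [ginj hi' hj' hij']
    · ext x
      constructor
      · rintro ⟨i, hi, rfl⟩
        simp only [Set.mem_Iio] at hi
        rcases i with _ | i
        · exact hp
        · exact Finset.mem_of_mem_erase (gmem i (by omega))
      · intro hx
        by_cases hxp : x = p
        · exact ⟨0, by simp, hxp.symm⟩
        · have : x ∈ g '' Set.Iio (m + 1) := by
            rw [gim]
            exact Finset.mem_erase.mpr ⟨hxp, hx⟩
          obtain ⟨i, hi, rfl⟩ := this
          simp only [Set.mem_Iio] at hi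
          exact ⟨i + 1, by simp only [Set.mem_Iio]; omega, rfl⟩
    · intro i j hij hj
      rcases j with _ | j
      · omega
      rcases i with _ | i
      · change dist p (g j) ≤ dist p (g 0)
        rw [g0]
        exact hmax _ (gmem j (by omega))
      · exact gr i j (by omega) (by omega)

/-- If `c` is at most as far from `a` as `b` is, the angle at `b` is acute. -/
theorem angle_le_of_dist_le (a b c : Plane) (h : dist a c ≤ dist a b) :
    EuclideanGeometry.angle a b c ≤ π / 2 := by
  unfold EuclideanGeometry.angle InnerProductGeometry.angle
  rw [Real.arccos_le_pi_div_two]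
  apply div_nonneg _ (by positivity)
  simp only [vsub_eq_sub]
  have e := norm_sub_sq_real (a - b) (c - b)
  rw [sub_sub_sub_cancel_right] at e
  rw [dist_eq_norm, dist_eq_norm] at h
  have := pow_le_pow_left₀ (norm_nonneg _) h 2
  nlinarith [sq_nonneg ‖c - b‖]

/-- Every set of `n ≥ 2` points in the plane admits an acute spanning path, and such a path
can be obtained greedily: starting from an arbitrary point of `S` and iteratively connecting
the current point to a point farthest from it among the remaining points. Concretely:
(1) every greedy ordering of `S` (one in which each point is at least as far from its
predecessor as all later points are) is an acute spanning path, and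
(2) from every starting point of `S` there is such a greedy ordering. -/
theorem acute_spanning_path_via_farthest_point
    (n : ℕ) (hn : 2 ≤ n) (S : Finset Plane) (hcard : S.card = n) :
    (∀ f : ℕ → Plane, Set.InjOn f (Set.Iio n) → f '' Set.Iio n = ↑S →
      (∀ i j : ℕ, i < j → j < n → dist (f i) (f j) ≤ dist (f i) (f (i + 1))) →
      ∀ i : ℕ, i + 2 < n →
        EuclideanGeometry.angle (f i) (f (i + 1)) (f (i + 2)) ≤ π / 2) ∧
    (∀ p ∈ S, ∃ f : ℕ → Plane, Set.InjOn f (Set.Iio n) ∧ f '' Set.Iio n = ↑S ∧ f 0 = p ∧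
      ∀ i j : ℕ, i < j → j < n → dist (f i) (f j) ≤ dist (f i) (f (i + 1))) := by
  constructor
  · intro f _ _ hf i hi
    exact angle_le_of_dist_le _ _ _ (hf i (i + 2) (by omega) hi)
  · obtain ⟨m, rfl⟩ : ∃ m, n = m + 1 := ⟨n - 1, by omega⟩
    exact greedy_exists m S hcard
end
end
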